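/- arXiv:1707.08706 — 12 statements merged into one kernel-verified Lean document; each statement's English description precedes it below -/
import Mathlib

section
/- Suppose there exists λ0 ≥ 0 such that the matrix Q1 + λ0·Q2 is positive definite. Then problem (P) is bounded from below, i.e., inf{f1(x) : x ∈ ℝⁿ, f2(x) ≤ 0} > −∞. -/
open Matrix

/-!
For a multiplier `l ≥ 0` the Lagrangian `f1 + l • f2` lies below `f1` on the feasible set `f2 ≤ 0`,
so it is enough to bound the Lagrangian from below on the whole space. It is again a quadratic
function, and when its Hessian `Q1 + l • Q2` is positive semidefinite, the exact second-order
expansion at a stationary point shows that this point is a global minimizer. A positive definite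
Hessian is invertible, so a stationary point exists.
-/

theorem bddBelow_image_of_bddBelow_range_lagrangian {α R : Type*} [Semiring R] [PartialOrder R]
    [IsOrderedRing R] {f g : α → R} {l : R} (hl : 0 ≤ l)
    (h : BddBelow (Set.range (f + l • g))) : BddBelow (f '' {x | g x ≤ 0}) := by
  obtain ⟨m, hm⟩ := h
  refine ⟨m, Set.forall_mem_image.2 fun x hx => ?_⟩
  calc m ≤ f x + l * g x := hm (Set.mem_range_self x)
    _ ≤ f x := add_le_of_nonpos_right (mul_nonpos_of_nonneg_of_nonpos hl hx)

section QuadraticFunction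

variable {ι 𝕜 : Type*} [Fintype ι] [Field 𝕜]

/-- The quadratic function `x ↦ (1/2) xᵀQx + bᵀx + c`. It is defined for every square matrix
`Q`; for symmetric `Q` its gradient is `Q *ᵥ x + b` and its Hessian is `Q`. -/
def quadraticFunction (Q : Matrix ι ι 𝕜) (b : ι → 𝕜) (c : 𝕜) (x : ι → 𝕜) : 𝕜 :=
  (1 / 2) * (x ⬝ᵥ Q *ᵥ x) + b ⬝ᵥ x + c

namespace quadraticFunction

theorem add_smul (Q₁ Q₂ : Matrix ι ι 𝕜) (b₁ b₂ : ι → 𝕜) (c₁ c₂ l : 𝕜) :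
    quadraticFunction Q₁ b₁ c₁ + l • quadraticFunction Q₂ b₂ c₂ =
      quadraticFunction (Q₁ + l • Q₂) (b₁ + l • b₂) (c₁ + l * c₂) := by
  ext x
  simp only [quadraticFunction, Pi.add_apply, Pi.smul_apply, smul_eq_mul, add_mulVec, smul_mulVec,
    dotProduct_add, dotProduct_smul, add_dotProduct, smul_dotProduct]
  ring

theorem apply_add_of_isSymm [NeZero (2 : 𝕜)] {Q : Matrix ι ι 𝕜} (hQ : Q.IsSymm) (b : ι → 𝕜)
    (c : 𝕜) (z h : ι → 𝕜) :
    quadraticFunction Q b c (z + h) =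
      quadraticFunction Q b c z + (Q *ᵥ z + b) ⬝ᵥ h + (1 / 2) * (h ⬝ᵥ Q *ᵥ h) := by
  have cross_left : z ⬝ᵥ Q *ᵥ h = Q *ᵥ z ⬝ᵥ h := by
    rw [dotProduct_mulVec, ← mulVec_transpose, hQ.eq]
  have cross_right : h ⬝ᵥ Q *ᵥ z = Q *ᵥ z ⬝ᵥ h := dotProduct_comm _ _
  simp only [quadraticFunction, mulVec_add, dotProduct_add, add_dotProduct, cross_left, cross_right]
  field

theorem exists_stationary_of_posDef [PartialOrder 𝕜] [StarRing 𝕜]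
    {Q : Matrix ι ι 𝕜} (hQ : Q.PosDef) (b : ι → 𝕜) : ∃ z, Q *ᵥ z + b = 0 := by
  classical
  obtain ⟨z, hz⟩ := mulVec_surjective_iff_isUnit.2 hQ.isUnit (-b)
  exact ⟨z, by rw [hz, neg_add_cancel]⟩

variable [LinearOrder 𝕜] [IsStrictOrderedRing 𝕜] [StarRing 𝕜] [TrivialStar 𝕜]

theorem le_of_stationary {Q : Matrix ι ι 𝕜} (hQ : Q.PosSemidef) {b z : ι → 𝕜}
    (hz : Q *ᵥ z + b = 0) (c : 𝕜) (x : ι → 𝕜) :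
    quadraticFunction Q b c z ≤ quadraticFunction Q b c x := by
  have curvature_nonneg : 0 ≤ (x - z) ⬝ᵥ Q *ᵥ (x - z) := by
    simpa only [star_trivial] using hQ.dotProduct_mulVec_nonneg (x - z)
  calc quadraticFunction Q b c z
      ≤ quadraticFunction Q b c z + (1 / 2) * ((x - z) ⬝ᵥ Q *ᵥ (x - z)) :=
        le_add_of_nonneg_right (by positivity)
    _ = quadraticFunction Q b c (z + (x - z)) := by
        rw [apply_add_of_isSymm (isHermitian_iff_isSymm.1 hQ.isHermitian), hz, zero_dotProduct,
          add_zero]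
    _ = quadraticFunction Q b c x := by rw [add_sub_cancel]

end quadraticFunction

theorem gtrs_bounded_below_general [LinearOrder 𝕜] [IsStrictOrderedRing 𝕜] [StarRing 𝕜]
    [TrivialStar 𝕜] {Q₁ Q₂ : Matrix ι ι 𝕜} {b₁ b₂ : ι → 𝕜} (c₁ c₂ : 𝕜) {l : 𝕜} (hl : 0 ≤ l)
    (hQ : (Q₁ + l • Q₂).PosSemidef)
    (hstat : ∃ z, (Q₁ + l • Q₂) *ᵥ z + (b₁ + l • b₂) = 0) :
    BddBelow (quadraticFunction Q₁ b₁ c₁ '' {x | quadraticFunction Q₂ b₂ c₂ x ≤ 0}) := by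
  obtain ⟨z, hz⟩ := hstat
  apply bddBelow_image_of_bddBelow_range_lagrangian hl
  rw [quadraticFunction.add_smul]
  exact ⟨_, Set.forall_mem_range.2 (quadraticFunction.le_of_stationary hQ hz _)⟩

end QuadraticFunction

/-- If there exists `λ0 ≥ 0` with `Q1 + λ0 • Q2` positive definite, then the GTRS
problem (P): minimize `f1` subject to `f2 ≤ 0` is bounded from below. -/
theorem gtrs_bounded_below
    (n : ℕ) (Q1 Q2 : Matrix (Fin n) (Fin n) ℝ)
    (hQ1 : Q1.IsSymm) (hQ2 : Q2.IsSymm)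
    (b1 b2 : Fin n → ℝ) (c : ℝ)
    (f1 : (Fin n → ℝ) → ℝ) (f2 : (Fin n → ℝ) → ℝ)
    (hf1 : ∀ x, f1 x = (1 / 2) * (x ⬝ᵥ Q1.mulVec x) + b1 ⬝ᵥ x)
    (hf2 : ∀ x, f2 x = (1 / 2) * (x ⬝ᵥ Q2.mulVec x) + b2 ⬝ᵥ x + c)
    (hpd : ∃ lam0 : ℝ, 0 ≤ lam0 ∧ (Q1 + lam0 • Q2).PosDef) :
    ∃ m : ℝ, ∀ x : Fin n → ℝ, f2 x ≤ 0 → m ≤ f1 x := by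
  obtain rfl : f1 = quadraticFunction Q1 b1 0 := funext fun x => (hf1 x).trans (add_zero _).symm
  obtain rfl : f2 = quadraticFunction Q2 b2 c := funext hf2
  obtain ⟨l, hl, hQ⟩ := hpd
  obtain ⟨m, hm⟩ := gtrs_bounded_below_general 0 c hl hQ.posSemidef
    (quadraticFunction.exists_stationary_of_posDef hQ (b1 + l • b2))
  exact ⟨m, Set.forall_mem_image.1 hm⟩
end

section
/- Let λ1 < λ2 be real numbers such that Q1 + λ1·Q2 and Q1 + λ2·Q2 are both positive semidefinite, and assume the common null space of Q1 and Q2 is trivial, i.e., null(Q1) ∩ null(Q2) = {0}. Then for every λ with λ1 < λ < λ2, the matrix Q1 + λ·Q2 is positive definite. -/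
open Matrix

/-!
For `lam1 < lam < lam2`, the matrix `Q1 + lam • Q2` is a combination of `Q1 + lam1 • Q2` and
`Q1 + lam2 • Q2` with positive coefficients. A vector isotropic for a sum of two positive
semidefinite matrices is isotropic for both, hence lies in both kernels; and a vector killed by
`Q1 + lam • Q2` for two distinct values of `lam` is killed by `Q1` and `Q2`.
-/

section Module

variable {R M : Type*}

theorem eq_zero_and_eq_zero_of_add_smul_eq_zero [Ring R] [IsCancelMulZero R] [AddCommGroup M]
    [Module R M] [Module.IsTorsionFree R M] {r s : R} (hrs : r ≠ s) {x y : M}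
    (hr : x + r • y = 0) (hs : x + s • y = 0) : x = 0 ∧ y = 0 := by
  have hy : y = 0 := by
    by_contra hy
    exact hrs (smul_left_injective R hy (add_left_cancel (hr.trans hs.symm)))
  exact ⟨by simpa [hy] using hr, hy⟩

theorem add_smul_mem_openSegment [Semiring R] [PartialOrder R] [AddCommMonoid M] [Module R M]
    {r s t : R} (ht : t ∈ openSegment R r s) (x y : M) :
    x + t • y ∈ openSegment R (x + r • y) (x + s • y) := by
  obtain ⟨a, b, ha, hb, hab, rfl⟩ := ht
  refine ⟨a, b, ha, hb, hab, ?_⟩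
  calc a • (x + r • y) + b • (x + s • y) = (a + b) • x + (a • r + b • s) • y := by
        simp only [smul_add, add_smul, smul_eq_mul, mul_smul]
        abel
    _ = x + (a • r + b • s) • y := by rw [hab, one_smul]

end Module

section Matrix

open scoped ComplexOrder

variable {𝕜 n : Type*} [RCLike 𝕜] [Fintype n] {A B C : Matrix n n 𝕜}

theorem posDef_add_of_posSemidef (hA : A.PosSemidef) (hB : B.PosSemidef)
    (hker : ∀ v, A *ᵥ v = 0 → B *ᵥ v = 0 → v = 0) : (A + B).PosDef := by
  refine .of_dotProduct_mulVec_pos (hA.isHermitian.add hB.isHermitian) fun v hv ↦ ?_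
  have hAv := hA.dotProduct_mulVec_nonneg v
  have hBv := hB.dotProduct_mulVec_nonneg v
  rw [add_mulVec, dotProduct_add]
  refine (add_nonneg hAv hBv).lt_of_ne' fun hsum ↦ hv ?_
  obtain ⟨hAv₀, hBv₀⟩ := (add_eq_zero_iff_of_nonneg hAv hBv).1 hsum
  exact hker v ((hA.dotProduct_mulVec_zero_iff v).1 hAv₀) ((hB.dotProduct_mulVec_zero_iff v).1 hBv₀)

theorem posDef_of_mem_openSegment (hA : A.PosSemidef) (hB : B.PosSemidef)
    (hker : ∀ v, A *ᵥ v = 0 → B *ᵥ v = 0 → v = 0) (hC : C ∈ openSegment ℝ A B) : C.PosDef := by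
  obtain ⟨a, b, ha, hb, -, rfl⟩ := hC
  refine posDef_add_of_posSemidef (hA.smul ha.le) (hB.smul hb.le) fun v hAv hBv ↦ hker v ?_ ?_
  · rwa [smul_mulVec, smul_eq_zero_iff_right ha.ne'] at hAv
  · rwa [smul_mulVec, smul_eq_zero_iff_right hb.ne'] at hBv

theorem posDef_of_strictly_between_general {Q₁ Q₂ : Matrix n n 𝕜} {r s t : ℝ}
    (hr : (Q₁ + r • Q₂).PosSemidef) (hs : (Q₁ + s • Q₂).PosSemidef)
    (hker : ∀ v, Q₁ *ᵥ v = 0 → Q₂ *ᵥ v = 0 → v = 0) (hrt : r < t) (hts : t < s) :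
    (Q₁ + t • Q₂).PosDef := by
  have hrs : r < s := hrt.trans hts
  have ht : t ∈ openSegment ℝ r s := by
    rw [openSegment_eq_Ioo hrs]
    exact ⟨hrt, hts⟩
  refine posDef_of_mem_openSegment hr hs (fun v hrv hsv ↦ ?_) (add_smul_mem_openSegment ht Q₁ Q₂)
  rw [add_mulVec, smul_mulVec] at hrv hsv
  obtain ⟨hQ₁v, hQ₂v⟩ := eq_zero_and_eq_zero_of_add_smul_eq_zero hrs.ne hrv hsv
  exact hker v hQ₁v hQ₂v

end Matrix

/-- If `Q1 + λ1 • Q2` and `Q1 + λ2 • Q2` are positive semidefinite with `λ1 < λ2`,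
and the common null space of `Q1` and `Q2` is trivial, then `Q1 + λ • Q2` is
positive definite for every `λ1 < λ < λ2`. -/
theorem posDef_of_strictly_between
    (n : ℕ) (Q1 Q2 : Matrix (Fin n) (Fin n) ℝ)
    (hQ1 : Q1.IsSymm) (hQ2 : Q2.IsSymm)
    (lam1 lam2 : ℝ) (hlt : lam1 < lam2)
    (h1 : (Q1 + lam1 • Q2).PosSemidef) (h2 : (Q1 + lam2 • Q2).PosSemidef)
    (hnull : ∀ v : Fin n → ℝ, Q1.mulVec v = 0 → Q2.mulVec v = 0 → v = 0) :
    ∀ lam : ℝ, lam1 < lam → lam < lam2 → (Q1 + lam • Q2).PosDef := by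
  intro lam hlam1 hlam2
  exact posDef_of_strictly_between_general h1 h2 hnull hlam1 hlam2
end

section
/- Suppose the Slater condition holds, null(Q1) ∩ null(Q2) = {0}, and {λ ≥ 0 : Q1 + λQ2 is positive semidefinite} = [λ1, λ2] with λ1 < λ2 (Condition 1). Define hᵢ(x) = f1(x) + λᵢ·f2(x) for i = 1, 2. Then problem (P) is equivalent to the convex problem (P1): inf{f1(x) : f2(x) ≤ 0} = inf over x ∈ ℝⁿ of max{h1(x), h2(x)}. -/
open Matrix

/-!
A feasible point satisfies `h1 x, h2 x ≤ f1 x` because `lam1, lam2 ≥ 0`. For the converse, take `μ`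
just outside `[lam1, lam2]`. The form `Q1 + μ Q2` takes a negative value at some `v`, and `v` has
negative `Q2`-form if `μ > lam2`, positive `Q2`-form if `μ < lam1`. For `x` with `f2 x ≥ 0`
(resp. `f2 x ≤ 0`), the line through `x` in direction `v` therefore meets `{f2 = 0}` on both sides
of `x`. On one of the two sides the quadratic `f1 + μ f2`, which is concave along the line, does not
increase, so some `y` has `f2 y = 0` and `f1 y ≤ f1 x + μ f2 x`. Letting `μ` tend to the endpoint,
the infimum of (P) is at most `h2 x` (resp. `h1 x`). If `lam1 = 0` there is no `μ ≥ 0` below it, but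
then `h1 = f1` and a point `x` with `f2 x ≤ 0` is itself feasible.
-/

open Filter Set Topology

lemma csInf_eq_csInf_of_lowerBounds_eq {α : Type*} [ConditionallyCompleteLinearOrder α]
    {s t : Set α} (hs : s.Nonempty) (ht : t.Nonempty) (h : lowerBounds s = lowerBounds t) :
    sInf s = sInf t := by
  by_cases hbdd : BddBelow s
  · have hglb : IsGLB t (sInf s) := by simpa only [IsGLB, h] using isGLB_csInf hs hbdd
    exact (hglb.csInf_eq ht).symm
  · have hbdd' : ¬BddBelow t := by simpa only [BddBelow, h] using hbdd
    rw [csInf_of_not_bddBelow hbdd, csInf_of_not_bddBelow hbdd']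

lemma exists_quadratic_eq_zero_and_mul_nonpos {a b c : ℝ} (ha : a ≠ 0) (hac : a * c ≤ 0) (γ : ℝ) :
    ∃ t, a * (t * t) + b * t + c = 0 ∧ γ * t ≤ 0 := by
  have hdiscrim : 0 ≤ discrim a b c := by
    rw [discrim]
    linarith [sq_nonneg b]
  obtain ⟨t, ht⟩ := exists_quadratic_eq_zero ha
    ⟨√(discrim a b c), (Real.mul_self_sqrt hdiscrim).symm⟩
  obtain ⟨s, hs, -, hts⟩ := vieta_formula_quadratic (b := -(b / a)) (c := c / a) (x := t)
    (by field_simp; linarith)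
  have hs' : a * (s * s) + b * s + c = 0 := by
    field_simp at hs
    linarith
  have hts_nonpos : t * s ≤ 0 := by
    rw [hts, ← mul_div_mul_left c a ha]
    exact div_nonpos_of_nonpos_of_nonneg hac (mul_self_nonneg a)
  have hprod : (γ * t) * (γ * s) ≤ 0 := by
    rw [mul_mul_mul_comm]
    exact mul_nonpos_of_nonneg_of_nonpos (mul_self_nonneg γ) hts_nonpos
  rcases le_or_gt (γ * t) 0 with hγt | hγt
  · exact ⟨t, ht, hγt⟩
  · exact ⟨s, hs', nonpos_of_mul_nonpos_right hprod hγt⟩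

section VectorSpace

variable {E : Type*} [AddCommGroup E] [Module ℝ E] {f g f₁ f₂ : E → ℝ}
  {p q q₁ q₂ : QuadraticForm ℝ E}

/-- `f` is a polynomial function of degree at most two whose second derivative at any point is
`v ↦ q v` on the diagonal. The factor `1 / 2` makes `q` the form of the matrix `Q` when
`f x = (1 / 2) xᵀQx + bᵀx + c`. -/
def HasHessianForm (f : E → ℝ) (q : QuadraticForm ℝ E) : Prop :=
  ∃ (ℓ : E →ₗ[ℝ] ℝ) (c : ℝ), ∀ x, f x = (1 / 2) * q x + ℓ x + c

/-- The set `I_PSD` of multipliers `lam ≥ 0` for which `q₁ + lam q₂` is positive semidefinite. It is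
phrased by values because a quadratic form has no separate symmetry condition to record. -/
def psdMultipliers (q₁ q₂ : QuadraticForm ℝ E) : Set ℝ :=
  {lam | 0 ≤ lam ∧ ∀ v, 0 ≤ (q₁ + lam • q₂) v}

namespace HasHessianForm

lemma add_const_mul (hf : HasHessianForm f p) (hg : HasHessianForm g q) (r : ℝ) :
    HasHessianForm (fun x => f x + r * g x) (p + r • q) := by
  obtain ⟨ℓ, c, hf⟩ := hf
  obtain ⟨m, d, hg⟩ := hg
  refine ⟨ℓ + r • m, c + r * d, fun x => ?_⟩
  simp only [hf, hg, _root_.add_apply, _root_.smul_apply, LinearMap.add_apply,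
    LinearMap.smul_apply, smul_eq_mul]
  ring

lemma exists_apply_add_smul (hf : HasHessianForm f q) (x v : E) :
    ∃ β, ∀ t : ℝ, f (x + t • v) = q v / 2 * (t * t) + β * t + f x := by
  obtain ⟨ℓ, c, hf⟩ := hf
  refine ⟨QuadraticMap.polar q x v / 2 + ℓ v, fun t => ?_⟩
  rw [hf, hf, QuadraticMap.map_add q, QuadraticMap.map_smul, QuadraticMap.polar_smul_right,
    map_add, map_smul, smul_eq_mul, smul_eq_mul, smul_eq_mul]
  ring

lemma exists_eq_zero_and_le (hf : HasHessianForm f p) (hg : HasHessianForm g q) {x v : E}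
    (hpv : p v ≤ 0) (hqv : q v ≠ 0) (hqg : q v * g x ≤ 0) : ∃ y, g y = 0 ∧ f y ≤ f x := by
  obtain ⟨β, hfline⟩ := hf.exists_apply_add_smul x v
  obtain ⟨γ, hgline⟩ := hg.exists_apply_add_smul x v
  obtain ⟨t, hroot, hβt⟩ := exists_quadratic_eq_zero_and_mul_nonpos (a := q v / 2) (b := γ)
    (c := g x) (by positivity) (by linarith) β
  refine ⟨x + t • v, (hgline t).trans hroot, ?_⟩
  have hcurv : p v / 2 * (t * t) ≤ 0 :=
    mul_nonpos_of_nonpos_of_nonneg (by linarith) (mul_self_nonneg t)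
  linarith [hfline t]

lemma exists_eq_zero_and_le_add_mul (hf₁ : HasHessianForm f₁ q₁) (hf₂ : HasHessianForm f₂ q₂)
    {lam μ : ℝ} (hlam : ∀ v, 0 ≤ (q₁ + lam • q₂) v) (hμ : ¬∀ v, 0 ≤ (q₁ + μ • q₂) v) {x : E}
    (hx : 0 ≤ (μ - lam) * f₂ x) : ∃ y, f₂ y = 0 ∧ f₁ y ≤ f₁ x + μ * f₂ x := by
  push Not at hμ
  obtain ⟨v, hv⟩ := hμ
  have hsign : (μ - lam) * q₂ v < 0 := by
    have hv' := hlam v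
    simp only [_root_.add_apply, _root_.smul_apply, smul_eq_mul] at hv hv'
    linarith
  have hopp : q₂ v * f₂ x ≤ 0 := by
    have hprod : ((μ - lam) * q₂ v) * ((μ - lam) * f₂ x) ≤ 0 :=
      mul_nonpos_of_nonpos_of_nonneg hsign.le hx
    rw [mul_mul_mul_comm] at hprod
    exact nonpos_of_mul_nonpos_right hprod (mul_self_pos.2 (left_ne_zero_of_mul hsign.ne))
  obtain ⟨y, hy, hle⟩ := (hf₁.add_const_mul hf₂ μ).exists_eq_zero_and_le hf₂ hv.le
    (right_ne_zero_of_mul hsign.ne) hopp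
  exact ⟨y, hy, by simpa only [hy, mul_zero, add_zero] using hle⟩

lemma le_add_mul_of_frequently (hf₁ : HasHessianForm f₁ q₁) (hf₂ : HasHessianForm f₂ q₂)
    {lam B : ℝ} (hlam : ∀ v, 0 ≤ (q₁ + lam • q₂) v) (hB : ∀ y, f₂ y = 0 → B ≤ f₁ y) {x : E}
    (hfreq : ∃ᶠ μ in 𝓝 lam, 0 ≤ (μ - lam) * f₂ x ∧ ¬∀ v, 0 ≤ (q₁ + μ • q₂) v) :
    B ≤ f₁ x + lam * f₂ x := by
  have hlim : Tendsto (fun μ => f₁ x + μ * f₂ x) (𝓝 lam) (𝓝 (f₁ x + lam * f₂ x)) :=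
    Continuous.tendsto (by fun_prop) lam
  refine ge_of_tendsto_of_frequently hlim (hfreq.mono fun μ ⟨hx, hμ⟩ => ?_)
  obtain ⟨y, hy, hle⟩ := hf₁.exists_eq_zero_and_le_add_mul hf₂ hlam hμ hx
  exact (hB y hy).trans hle

variable {lam1 lam2 B : ℝ} {x : E}

lemma le_add_mul_of_isGreatest (hf₁ : HasHessianForm f₁ q₁) (hf₂ : HasHessianForm f₂ q₂)
    (hlam2 : IsGreatest (psdMultipliers q₁ q₂) lam2) (hB : ∀ y, f₂ y = 0 → B ≤ f₁ y)
    (hx : 0 ≤ f₂ x) : B ≤ f₁ x + lam2 * f₂ x := by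
  refine hf₁.le_add_mul_of_frequently hf₂ hlam2.1.2 hB ?_
  have hright : ∀ᶠ μ in 𝓝[>] lam2, 0 ≤ (μ - lam2) * f₂ x ∧ ¬∀ v, 0 ≤ (q₁ + μ • q₂) v := by
    filter_upwards [self_mem_nhdsWithin] with μ (hμ : lam2 < μ)
    exact ⟨mul_nonneg (sub_nonneg.2 hμ.le) hx,
      fun hnonneg => hμ.not_ge (hlam2.2 ⟨hlam2.1.1.trans hμ.le, hnonneg⟩)⟩
  exact hright.frequently.filter_mono nhdsWithin_le_nhds

lemma le_add_mul_of_isLeast (hf₁ : HasHessianForm f₁ q₁) (hf₂ : HasHessianForm f₂ q₂)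
    (hlam1 : IsLeast (psdMultipliers q₁ q₂) lam1) (hB : ∀ y, f₂ y ≤ 0 → B ≤ f₁ y)
    (hx : f₂ x ≤ 0) : B ≤ f₁ x + lam1 * f₂ x := by
  rcases hlam1.1.1.eq_or_lt with rfl | hpos
  · simpa only [zero_mul, add_zero] using hB x hx
  refine hf₁.le_add_mul_of_frequently hf₂ hlam1.1.2 (fun y hy => hB y hy.le) ?_
  have hleft : ∀ᶠ μ in 𝓝[<] lam1, 0 ≤ (μ - lam1) * f₂ x ∧ ¬∀ v, 0 ≤ (q₁ + μ • q₂) v := by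
    filter_upwards [Ioo_mem_nhdsLT hpos] with μ ⟨hμ0, hμ⟩
    exact ⟨mul_nonneg_of_nonpos_of_nonpos (sub_nonpos.2 hμ.le) hx,
      fun hnonneg => hμ.not_ge (hlam1.2 ⟨hμ0.le, hnonneg⟩)⟩
  exact hleft.frequently.filter_mono nhdsWithin_le_nhds

end HasHessianForm

/-- Equality of the sets of lower bounds says that the infima agree in `[-∞, ∞]`, whereas `sInf` on
`ℝ` is `0` for every set unbounded below. -/
theorem gtrs_equiv_minimax_CQR_general (hf₁ : HasHessianForm f₁ q₁) (hf₂ : HasHessianForm f₂ q₂)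
    {lam1 lam2 : ℝ} (hlam1 : IsLeast (psdMultipliers q₁ q₂) lam1)
    (hlam2 : IsGreatest (psdMultipliers q₁ q₂) lam2) :
    lowerBounds (f₁ '' {x | f₂ x ≤ 0}) =
      lowerBounds (range fun x => max (f₁ x + lam1 * f₂ x) (f₁ x + lam2 * f₂ x)) := by
  ext B
  simp only [mem_lowerBounds, forall_mem_image, forall_mem_range, mem_ofPred_eq]
  refine ⟨fun hB x => ?_, fun hB x hx => (hB x).trans (max_le ?_ ?_)⟩
  · rcases le_total (f₂ x) 0 with hx | hx
    · exact le_max_of_le_left (hf₁.le_add_mul_of_isLeast hf₂ hlam1 (fun _ hy => hB hy) hx)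
    · exact le_max_of_le_right (hf₁.le_add_mul_of_isGreatest hf₂ hlam2 (fun _ hy => hB hy.le) hx)
  · exact add_le_of_nonpos_right (mul_nonpos_of_nonneg_of_nonpos hlam1.1.1 hx)
  · exact add_le_of_nonpos_right (mul_nonpos_of_nonneg_of_nonpos hlam2.1.1 hx)

end VectorSpace

section Matrix

variable {ι : Type*} [Fintype ι] [DecidableEq ι] {A B : Matrix ι ι ℝ}

lemma toQuadraticForm'_apply_eq_dotProduct (A : Matrix ι ι ℝ) (x : ι → ℝ) :
    A.toQuadraticForm' x = x ⬝ᵥ A *ᵥ x :=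
  toLinearMap₂'_apply' A x x

lemma psdMultipliers_toQuadraticForm' (hA : A.IsSymm) (hB : B.IsSymm) :
    psdMultipliers A.toQuadraticForm' B.toQuadraticForm' =
      {lam | 0 ≤ lam ∧ (A + lam • B).PosSemidef} := by
  have hherm (lam : ℝ) : (A + lam • B).IsHermitian := by
    rw [IsHermitian, conjTranspose_eq_transpose_of_trivial, (hA.add (hB.smul lam)).eq]
  simp only [psdMultipliers, posSemidef_iff_dotProduct_mulVec, hherm, true_and, star_trivial,
    _root_.add_apply, _root_.smul_apply, toQuadraticForm'_apply_eq_dotProduct,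
    add_mulVec, smul_mulVec, dotProduct_add, dotProduct_smul]

lemma hasHessianForm_toQuadraticForm' {f : (ι → ℝ) → ℝ} {b : ι → ℝ} {c : ℝ}
    (hf : ∀ x, f x = (1 / 2) * (x ⬝ᵥ A *ᵥ x) + b ⬝ᵥ x + c) :
    HasHessianForm f A.toQuadraticForm' :=
  ⟨dotProductBilin ℝ ℝ b, c, fun x => by
    rw [hf, toQuadraticForm'_apply_eq_dotProduct, dotProductBilin_apply_apply]⟩

end Matrix

/-- Under Condition 1 (`I_PSD = [λ1, λ2]` with `λ1 < λ2`), the Slater condition and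
triviality of the common null space, the GTRS (P) is equivalent to the convex
reformulation (P1): the minimax of the two convex quadratics `h1, h2`. -/
theorem gtrs_equiv_minimax_CQR
    (n : ℕ) (Q1 Q2 : Matrix (Fin n) (Fin n) ℝ)
    (hQ1 : Q1.IsSymm) (hQ2 : Q2.IsSymm)
    (b1 b2 : Fin n → ℝ) (c : ℝ)
    (f1 f2 : (Fin n → ℝ) → ℝ)
    (hf1 : ∀ x, f1 x = (1 / 2) * (x ⬝ᵥ Q1.mulVec x) + b1 ⬝ᵥ x)
    (hf2 : ∀ x, f2 x = (1 / 2) * (x ⬝ᵥ Q2.mulVec x) + b2 ⬝ᵥ x + c)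
    (hslater : ∃ xbar : Fin n → ℝ, f2 xbar < 0)
    (hnull : ∀ v : Fin n → ℝ, Q1.mulVec v = 0 → Q2.mulVec v = 0 → v = 0)
    (lam1 lam2 : ℝ) (hlt : lam1 < lam2)
    (hcond1 : {lam : ℝ | 0 ≤ lam ∧ (Q1 + lam • Q2).PosSemidef} = Set.Icc lam1 lam2)
    (h1 h2 : (Fin n → ℝ) → ℝ)
    (hh1 : ∀ x, h1 x = f1 x + lam1 * f2 x)
    (hh2 : ∀ x, h2 x = f1 x + lam2 * f2 x) :
    sInf (f1 '' {x | f2 x ≤ 0}) = sInf (Set.range fun x => max (h1 x) (h2 x)) := by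
  rw [← psdMultipliers_toQuadraticForm' hQ1 hQ2] at hcond1
  obtain rfl : h1 = fun x => f1 x + lam1 * f2 x := funext hh1
  obtain rfl : h2 = fun x => f1 x + lam2 * f2 x := funext hh2
  have hfeasible : {x | f2 x ≤ 0}.Nonempty := hslater.imp fun _ => le_of_lt
  exact csInf_eq_csInf_of_lowerBounds_eq (hfeasible.image f1) (range_nonempty _)
    (gtrs_equiv_minimax_CQR_general
      (hasHessianForm_toQuadraticForm' (c := 0) (by simpa only [add_zero] using hf1))
      (hasHessianForm_toQuadraticForm' hf2)
      (hcond1 ▸ isLeast_Icc hlt.le) (hcond1 ▸ isGreatest_Icc hlt.le))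
end

section
/- Suppose the Slater condition holds and {λ ≥ 0 : Q1 + λQ2 is positive semidefinite} = [λ3, ∞) for some λ3 ≥ 0 (Condition 2). Define h3(x) = f1(x) + λ3·f2(x). Then problem (P) is equivalent to the convex problem (P2): inf{f1(x) : f2(x) ≤ 0} = inf{h3(x) : f2(x) ≤ 0}. -/
open Matrix

/-!
Write `A = Q₁ + λ₃ Q₂`. On the feasible set the Lagrangian `h₃ = f₁ + λ₃ f₂` lies below `f₁`, so the
point is to find, for each feasible `x`, a feasible `y` with `f₁ y ≤ h₃ x`. Since `Q₁ + λ Q₂ ⪰ 0`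
for arbitrarily large `λ`, also `Q₂ ⪰ 0`. If `ker A` were contained in `ker Q₂`, then `Q₂ ⪯ K A` for
some `K`, and `A - ε Q₂` would be positive semidefinite for small `ε > 0`, against the minimality of
`λ₃`; this needs `λ₃ > 0`, but for `λ₃ = 0` simply `h₃ = f₁`. Hence some `v ∈ ker A` has
`vᵀ Q₂ v > 0`. Along `v` the function `h₃` is affine and `f₂` grows quadratically: moving from `x`
in the direction `± v` in which `h₃` does not increase reaches the boundary `f₂ = 0` at a point `y`,
where `f₁ y = h₃ y ≤ h₃ x`.
-/

open Filter Topology in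
lemma nonneg_of_forall_ge_nonneg_add_smul {E : Type*} [AddCommMonoid E] [Module ℝ E]
    [Preorder E] [PosSMulMono ℝ E] [TopologicalSpace E] [ContinuousAdd E]
    [ContinuousSMul ℝ E] [ClosedIciTopology E] {a b : E} {l₀ : ℝ}
    (h : ∀ l ≥ l₀, 0 ≤ a + l • b) : 0 ≤ b := by
  have hlim : Tendsto (fun l : ℝ ↦ l⁻¹ • a + b) atTop (𝓝 b) := by
    simpa using ((tendsto_inv_atTop_zero (𝕜 := ℝ)).smul_const a).add_const b
  refine ge_of_tendsto hlim ?_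
  filter_upwards [eventually_ge_atTop l₀, eventually_gt_atTop 0] with l hl hpos
  simpa [smul_smul, hpos.ne'] using smul_nonneg (inv_nonneg.2 hpos.le) (h l hl)

lemma exists_linearMap_comp_eq_of_ker_le_ker {K V W U : Type*} [DivisionRing K]
    [AddCommGroup V] [Module K V] [AddCommGroup W] [Module K W] [AddCommGroup U] [Module K U]
    {f : V →ₗ[K] W} {g : V →ₗ[K] U} (h : LinearMap.ker f ≤ LinearMap.ker g) :
    ∃ k : W →ₗ[K] U, k ∘ₗ f = g := by
  obtain ⟨k, hk⟩ := LinearMap.exists_extend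
    ((LinearMap.ker f).liftQ g h ∘ₗ f.quotKerEquivRange.symm.toLinearMap)
  refine ⟨k, LinearMap.ext fun x ↦ ?_⟩
  have hkx := LinearMap.congr_fun hk ⟨f x, LinearMap.mem_range_self f x⟩
  simpa [LinearMap.quotKerEquivRange_symm_apply_image] using hkx

lemma exists_mul_eq_of_forall_mulVec_eq_zero {K l m n : Type*} [Field K] [Fintype m] [Fintype n]
    {R : Matrix m n K} {S : Matrix l n K} (h : ∀ v, R *ᵥ v = 0 → S *ᵥ v = 0) :
    ∃ C : Matrix l m K, C * R = S := by
  classical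
  obtain ⟨k, hk⟩ := exists_linearMap_comp_eq_of_ker_le_ker (f := R.mulVecLin) (g := S.mulVecLin) h
  refine ⟨LinearMap.toMatrix' k, ?_⟩
  rw [← toLin'_apply', ← toLin'_apply'] at hk
  simpa [LinearMap.toMatrix'_comp] using congrArg LinearMap.toMatrix' hk

section RCLike

open scoped ComplexOrder

variable {ι 𝕜 : Type*} [RCLike 𝕜] {A B : Matrix ι ι 𝕜}

lemma posSemidef_of_forall_ge_posSemidef_add_smul {l₀ : ℝ}
    (h : ∀ l ≥ l₀, (A + l • B).PosSemidef) : B.PosSemidef := by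
  have hB : B.IsHermitian := by
    simpa [add_smul] using (h (l₀ + 1) (by simp)).isHermitian.sub (h l₀ le_rfl).isHermitian
  refine ⟨hB, fun x ↦ nonneg_of_forall_ge_nonneg_add_smul (l₀ := l₀)
    (a := x.sum fun i xi ↦ x.sum fun j xj ↦ star xi * A i j * xj) fun l hl ↦ ?_⟩
  simpa [Finsupp.sum, mul_add, add_mul, Finset.sum_add_distrib, Finset.smul_sum]
    using (h l hl).2 x

open scoped MatrixOrder Matrix.Norms.L2Operator in
lemma exists_posSemidef_smul_one_sub [Finite ι] [DecidableEq ι] (hB : B.IsHermitian) :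
    ∃ K : ℝ, 0 < K ∧ (K • 1 - B).PosSemidef := by
  cases nonempty_fintype ι
  obtain ⟨K, hK⟩ := (Matrix.finite_real_spectrum (A := B)).bddAbove
  refine ⟨max K 1, by positivity, ?_⟩
  rw [← Matrix.le_iff, ← Algebra.algebraMap_eq_smul_one]
  exact le_algebraMap_of_spectrum_le (fun x hx ↦ (hK hx).trans (le_max_left _ _)) hB

variable [Fintype ι]

open scoped MatrixOrder in
lemma exists_posSemidef_smul_sub (hA : A.PosSemidef) (hB : B.PosSemidef)
    (hker : ∀ v, A *ᵥ v = 0 → B *ᵥ v = 0) : ∃ K : ℝ, 0 < K ∧ (K • A - B).PosSemidef := by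
  classical
  obtain ⟨R, rfl⟩ := CStarAlgebra.nonneg_iff_eq_star_mul_self.mp hA.nonneg
  obtain ⟨S, rfl⟩ := CStarAlgebra.nonneg_iff_eq_star_mul_self.mp hB.nonneg
  simp only [star_eq_conjTranspose, conjTranspose_mul_self_mulVec_eq_zero] at hker ⊢
  obtain ⟨C, rfl⟩ := exists_mul_eq_of_forall_mulVec_eq_zero hker
  obtain ⟨K, hK, hKC⟩ := exists_posSemidef_smul_one_sub (isHermitian_conjTranspose_mul_self C)
  refine ⟨K, hK, ?_⟩
  simpa [Matrix.mul_sub, Matrix.sub_mul, Matrix.mul_assoc] using hKC.conjTranspose_mul_mul_same R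

lemma exists_posSemidef_sub_smul (hA : A.PosSemidef) (hB : B.PosSemidef)
    (hker : ∀ v, A *ᵥ v = 0 → B *ᵥ v = 0) {δ : ℝ} (hδ : 0 < δ) :
    ∃ ε ∈ Set.Ioc 0 δ, (A - ε • B).PosSemidef := by
  obtain ⟨K, hK, hdom⟩ := exists_posSemidef_smul_sub hA hB hker
  refine ⟨min δ K⁻¹, ⟨by positivity, min_le_left _ _⟩, ?_⟩
  set ε := min δ K⁻¹
  have hε : 0 ≤ ε := by positivity
  have hεK : ε * K ≤ 1 := by
    calc ε * K ≤ K⁻¹ * K := by gcongr; exact min_le_right _ _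
      _ = 1 := inv_mul_cancel₀ hK.ne'
  have hsplit : A - ε • B = (1 - ε * K) • A + ε • (K • A - B) := by module
  rw [hsplit]
  exact (hA.smul (sub_nonneg.2 hεK)).add (hdom.smul hε)

end RCLike

lemma exists_nonneg_quadratic_eq_zero {a b c : ℝ} (ha : 0 < a) (hc : c ≤ 0) :
    ∃ t : ℝ, 0 ≤ t ∧ a * (t * t) + b * t + c = 0 := by
  have hbD : b ^ 2 ≤ discrim a b c := by
    rw [discrim]; nlinarith
  have hD : discrim a b c = √(discrim a b c) * √(discrim a b c) :=
    (Real.mul_self_sqrt ((sq_nonneg b).trans hbD)).symm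
  refine ⟨(-b + √(discrim a b c)) / (2 * a), ?_, (quadratic_eq_zero_iff ha.ne' hD _).2 (.inl rfl)⟩
  have hb : b ≤ √(discrim a b c) := Real.le_sqrt_of_sq_le hbD
  exact div_nonneg (by linarith) (by linarith)

section QuadFun

variable {ι : Type*} [Fintype ι]

/-- The quadratic function `x ↦ ½ xᵀQx + bᵀx + c`, the shape of the objective, the constraint and
the Lagrangian of the problem; `Q` is not required to be symmetric. -/
noncomputable def quadFun (Q : Matrix ι ι ℝ) (b : ι → ℝ) (c : ℝ) (x : ι → ℝ) : ℝ :=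
  (1 / 2) * (x ⬝ᵥ Q *ᵥ x) + b ⬝ᵥ x + c

lemma quadFun_add_mul_quadFun (Q₁ Q₂ : Matrix ι ι ℝ) (b₁ b₂ : ι → ℝ) (c₁ c₂ l : ℝ) (x : ι → ℝ) :
    quadFun Q₁ b₁ c₁ x + l * quadFun Q₂ b₂ c₂ x =
      quadFun (Q₁ + l • Q₂) (b₁ + l • b₂) (c₁ + l * c₂) x := by
  simp only [quadFun, add_mulVec, smul_mulVec, dotProduct_add, add_dotProduct, dotProduct_smul,
    smul_dotProduct, smul_eq_mul]
  ring

variable (Q : Matrix ι ι ℝ) (b : ι → ℝ) (c : ℝ)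

lemma quadFun_add_smul (x v : ι → ℝ) (t : ℝ) :
    quadFun Q b c (x + t • v) = (1 / 2) * (v ⬝ᵥ Q *ᵥ v) * (t * t) +
      ((1 / 2) * (x ⬝ᵥ Q *ᵥ v + v ⬝ᵥ Q *ᵥ x) + b ⬝ᵥ v) * t + quadFun Q b c x := by
  simp only [quadFun, mulVec_add, mulVec_smul, dotProduct_add, add_dotProduct, dotProduct_smul,
    smul_dotProduct, smul_eq_mul]
  ring

variable {Q} {v : ι → ℝ}

lemma quadFun_add_smul_of_mulVec_eq_zero (hQ : Q.IsSymm) (hv : Q *ᵥ v = 0) (x : ι → ℝ) (t : ℝ) :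
    quadFun Q b c (x + t • v) = quadFun Q b c x + b ⬝ᵥ v * t := by
  have hvQ : v ⬝ᵥ Q *ᵥ x = 0 := by
    rw [dotProduct_mulVec, ← mulVec_transpose, hQ.eq, hv, zero_dotProduct]
  rw [quadFun_add_smul, hvQ, hv, dotProduct_zero, dotProduct_zero]
  ring

lemma exists_nonneg_quadFun_add_smul_eq_zero (hv : 0 < v ⬝ᵥ Q *ᵥ v) {x : ι → ℝ}
    (hx : quadFun Q b c x ≤ 0) : ∃ t : ℝ, 0 ≤ t ∧ quadFun Q b c (x + t • v) = 0 := by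
  simp only [quadFun_add_smul]
  exact exists_nonneg_quadratic_eq_zero (by positivity) hx

lemma exists_quadFun_eq_zero_and_quadFun_le {A : Matrix ι ι ℝ} (a : ι → ℝ) (d : ℝ)
    (hA : A.IsSymm) (hAv : A *ᵥ v = 0) (hQv : 0 < v ⬝ᵥ Q *ᵥ v) {x : ι → ℝ}
    (hx : quadFun Q b c x ≤ 0) :
    ∃ y, quadFun Q b c y = 0 ∧ quadFun A a d y ≤ quadFun A a d x := by
  wlog hav : a ⬝ᵥ v ≤ 0 generalizing v
  · exact this (v := -v) (by simpa [mulVec_neg]) (by simpa [mulVec_neg])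
      (by simpa using (not_le.1 hav).le)
  obtain ⟨t, ht, hzero⟩ := exists_nonneg_quadFun_add_smul_eq_zero b c hQv hx
  refine ⟨x + t • v, hzero, ?_⟩
  rw [quadFun_add_smul_of_mulVec_eq_zero a d hA hAv]
  exact add_le_of_nonpos_right (mul_nonpos_of_nonpos_of_nonneg hav ht)

end QuadFun

section PSDInterval

variable {ι : Type*} {Q₁ Q₂ : Matrix ι ι ℝ} {lam : ℝ}

/-- The set `I_PSD` of multipliers `l ≥ 0` for which the Hessian `Q₁ + l Q₂` of the Lagrangian is
positive semidefinite, that is, for which the Lagrangian is convex. -/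
def psdInterval (Q₁ Q₂ : Matrix ι ι ℝ) : Set ℝ :=
  {l | 0 ≤ l ∧ (Q₁ + l • Q₂).PosSemidef}

lemma mem_psdInterval {l : ℝ} : l ∈ psdInterval Q₁ Q₂ ↔ 0 ≤ l ∧ (Q₁ + l • Q₂).PosSemidef :=
  Iff.rfl

variable [Fintype ι]

lemma exists_mulVec_eq_zero_and_dotProduct_pos_of_psdInterval_eq_Ici
    (hI : psdInterval Q₁ Q₂ = Set.Ici lam) (hlam : 0 < lam) :
    ∃ v, (Q₁ + lam • Q₂) *ᵥ v = 0 ∧ 0 < v ⬝ᵥ Q₂ *ᵥ v := by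
  have hpsd (l : ℝ) (hl : lam ≤ l) : (Q₁ + l • Q₂).PosSemidef := (mem_psdInterval.1 (hI.ge hl)).2
  have hQ₂ : Q₂.PosSemidef := posSemidef_of_forall_ge_posSemidef_add_smul hpsd
  by_contra! hneg
  have hker (v) (hv : (Q₁ + lam • Q₂) *ᵥ v = 0) : Q₂ *ᵥ v = 0 :=
    (hQ₂.dotProduct_mulVec_zero_iff v).1 <|
      (hneg v hv).antisymm (hQ₂.dotProduct_mulVec_nonneg v)
  obtain ⟨ε, ⟨hε, hεlam⟩, hεpsd⟩ :=
    exists_posSemidef_sub_smul (hpsd lam le_rfl) hQ₂ hker hlam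
  have hmem : lam - ε ∈ psdInterval Q₁ Q₂ :=
    mem_psdInterval.2 ⟨sub_nonneg.2 hεlam, by rwa [sub_smul, ← add_sub_assoc]⟩
  rw [hI, Set.mem_Ici] at hmem
  linarith

lemma exists_feasible_le_lagrangian_of_psdInterval_eq_Ici
    (hI : psdInterval Q₁ Q₂ = Set.Ici lam)
    (b₁ b₂ : ι → ℝ) (c₁ c₂ : ℝ) {x : ι → ℝ} (hx : quadFun Q₂ b₂ c₂ x ≤ 0) :
    ∃ y, quadFun Q₂ b₂ c₂ y ≤ 0 ∧
      quadFun Q₁ b₁ c₁ y ≤ quadFun Q₁ b₁ c₁ x + lam * quadFun Q₂ b₂ c₂ x := by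
  have hmem : 0 ≤ lam ∧ (Q₁ + lam • Q₂).PosSemidef := mem_psdInterval.1 (hI.ge Set.self_mem_Ici)
  obtain rfl | hlam := hmem.1.eq_or_lt
  · exact ⟨x, hx, by simp⟩
  have hsymm : (Q₁ + lam • Q₂).IsSymm := by simpa using hmem.2.isHermitian
  obtain ⟨v, hker, hpos⟩ := exists_mulVec_eq_zero_and_dotProduct_pos_of_psdInterval_eq_Ici hI hlam
  obtain ⟨y, hy, hle⟩ := exists_quadFun_eq_zero_and_quadFun_le
    b₂ c₂ (b₁ + lam • b₂) (c₁ + lam * c₂) hsymm hker hpos hx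
  refine ⟨y, hy.le, ?_⟩
  rw [← quadFun_add_mul_quadFun, ← quadFun_add_mul_quadFun, hy] at hle
  simpa using hle

end PSDInterval

/-- Mutual coinitiality expresses that the two problems have the same infimum in `[-∞, ∞]`, and that
one attains it iff the other does, without the value `0` that `sInf` takes on sets of reals that are
empty or unbounded below. -/
theorem gtrs_equiv_CQR_cond2_general {ι : Type*} [Fintype ι] {Q1 Q2 : Matrix ι ι ℝ}
    {b1 b2 : ι → ℝ} {c lam3 : ℝ} {f1 f2 h3 : (ι → ℝ) → ℝ}
    (hf1 : ∀ x, f1 x = (1 / 2) * (x ⬝ᵥ Q1 *ᵥ x) + b1 ⬝ᵥ x)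
    (hf2 : ∀ x, f2 x = (1 / 2) * (x ⬝ᵥ Q2 *ᵥ x) + b2 ⬝ᵥ x + c)
    (hcond2 : {lam : ℝ | 0 ≤ lam ∧ (Q1 + lam • Q2).PosSemidef} = Set.Ici lam3)
    (hh3 : ∀ x, h3 x = f1 x + lam3 * f2 x) :
    IsCoinitialFor (f1 '' {x | f2 x ≤ 0}) (h3 '' {x | f2 x ≤ 0}) ∧
      IsCoinitialFor (h3 '' {x | f2 x ≤ 0}) (f1 '' {x | f2 x ≤ 0}) := by
  have hlam3 : 0 ≤ lam3 := (hcond2.ge Set.self_mem_Ici).1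
  have hquad1 : f1 = quadFun Q1 b1 0 := funext fun x ↦ by simp [hf1, quadFun]
  have hquad2 : f2 = quadFun Q2 b2 c := funext hf2
  constructor
  · rintro _ ⟨x, hx, rfl⟩
    refine ⟨h3 x, ⟨x, hx, rfl⟩, ?_⟩
    rw [hh3]
    exact add_le_of_nonpos_right (mul_nonpos_of_nonneg_of_nonpos hlam3 hx)
  · rintro _ ⟨x, hx, rfl⟩
    subst hquad1 hquad2
    obtain ⟨y, hy, hle⟩ := exists_feasible_le_lagrangian_of_psdInterval_eq_Ici hcond2 b1 b2 0 c hx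
    exact ⟨_, ⟨y, hy, rfl⟩, hle.trans_eq (hh3 x).symm⟩

/-- Under Condition 2 (`I_PSD = [λ3, ∞)`) and the Slater condition, the GTRS (P)
is equivalent to the convex problem (P2): minimize `h3 = f1 + λ3 f2` over `f2 ≤ 0`. -/
theorem gtrs_equiv_CQR_cond2
    (n : ℕ) (Q1 Q2 : Matrix (Fin n) (Fin n) ℝ)
    (hQ1 : Q1.IsSymm) (hQ2 : Q2.IsSymm)
    (b1 b2 : Fin n → ℝ) (c : ℝ)
    (f1 f2 : (Fin n → ℝ) → ℝ)
    (hf1 : ∀ x, f1 x = (1 / 2) * (x ⬝ᵥ Q1.mulVec x) + b1 ⬝ᵥ x)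
    (hf2 : ∀ x, f2 x = (1 / 2) * (x ⬝ᵥ Q2.mulVec x) + b2 ⬝ᵥ x + c)
    (hslater : ∃ xbar : Fin n → ℝ, f2 xbar < 0)
    (lam3 : ℝ) (hlam3 : 0 ≤ lam3)
    (hcond2 : {lam : ℝ | 0 ≤ lam ∧ (Q1 + lam • Q2).PosSemidef} = Set.Ici lam3)
    (h3 : (Fin n → ℝ) → ℝ)
    (hh3 : ∀ x, h3 x = f1 x + lam3 * f2 x) :
    sInf (f1 '' {x | f2 x ≤ 0}) = sInf (h3 '' {x | f2 x ≤ 0}) := by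
  obtain ⟨hle, hge⟩ := gtrs_equiv_CQR_cond2_general hf1 hf2 hcond2 hh3
  exact csInf_eq_csInf_of_forall_exists_le hle hge
end

section
/- Suppose {λ ≥ 0 : Q1 + λQ2 is positive semidefinite} = [λ1, λ2] with λ1 < λ2 (Condition 1) and null(Q1) ∩ null(Q2) = {0}. Let A1 = Q1 + λ1·Q2 and A2 = Q1 + λ2·Q2. Then A1 and A2 are simultaneously diagonalizable by congruence: there exists an invertible n×n matrix S such that SᵀA1S and SᵀA2S are both diagonal matrices. -/
open Matrix

/-! Two positive semidefinite matrices `A` and `B` are always simultaneously diagonalizable by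
congruence. A congruence turns `A + B` into an orthogonal projection `P`. Since `A` vanishes on the
kernel of `A + B`, the same congruence turns `A` into a Hermitian matrix vanishing on the kernel of
`P`, hence commuting with `P`, and a unitary matrix then diagonalizes both. -/

section JointDiagonalization

variable {𝕜 ι : Type*} [RCLike 𝕜]

theorem exists_orthonormalBasis_forall_apply_eq_smul_of_pairwise_commute
    {E : Type*} [NormedAddCommGroup E] [InnerProductSpace 𝕜 E] [FiniteDimensional 𝕜 E]
    {d : ℕ} (hd : Module.finrank 𝕜 E = d) {T : ι → Module.End 𝕜 E}
    (hT : ∀ i, (T i).IsSymmetric) (hcomm : Pairwise fun i j => Commute (T i) (T j)) :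
    ∃ (b : OrthonormalBasis (Fin d) 𝕜 E) (χ : Fin d → ι → 𝕜), ∀ k i, T i (b k) = χ k i • b k := by
  classical
  have orthogonal := LinearMap.IsSymmetric.orthogonalFamily_iInf_eigenspaces hT
  have internal := LinearMap.IsSymmetric.directSum_isInternal_of_pairwise_commute hT hcomm
  -- A subordinate basis requires a finite index type: keep only the nonzero joint eigenspaces.
  have : Fintype {χ : ι → 𝕜 // ⨅ i, Module.End.eigenspace (T i) (χ i) ≠ ⊥} :=
    (WellFoundedGT.finite_ne_bot_of_iSupIndep internal.submodule_iSupIndep).fintype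
  have internal_ne_bot := DirectSum.isInternal_ne_bot_iff.mpr internal
  have orthogonal_ne_bot := orthogonal.comp
    (Subtype.val_injective (p := fun χ => ⨅ i, Module.End.eigenspace (T i) (χ i) ≠ ⊥))
  refine ⟨internal_ne_bot.subordinateOrthonormalBasis hd orthogonal_ne_bot,
    fun k => (internal_ne_bot.subordinateOrthonormalBasisIndex hd k orthogonal_ne_bot).val,
    fun k i => ?_⟩
  have joint := internal_ne_bot.subordinateOrthonormalBasis_subordinate hd k orthogonal_ne_bot
  exact Module.End.mem_eigenspace_iff.mp ((Submodule.mem_iInf _).mp joint i)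

variable {n : Type*} [Fintype n] [DecidableEq n]

theorem exists_unitaryGroup_forall_isDiag_of_pairwise_commute {A : ι → Matrix n n 𝕜}
    (hA : ∀ i, (A i).IsHermitian) (hcomm : Pairwise fun i j => Commute (A i) (A j)) :
    ∃ U : unitaryGroup n 𝕜, ∀ i, ((U : Matrix n n 𝕜)ᴴ * A i * U).IsDiag := by
  let T (i : ι) : Module.End 𝕜 (EuclideanSpace 𝕜 n) := toEuclideanLin (A i)
  have hT (i : ι) : (T i).IsSymmetric := isSymmetric_toEuclideanLin_iff.mpr (hA i)
  have hT_comm : Pairwise fun i j => Commute (T i) (T j) :=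
    fun i j hij => (hcomm hij).map (toLpLinAlgEquiv 2)
  obtain ⟨b, χ, hb⟩ := exists_orthonormalBasis_forall_apply_eq_smul_of_pairwise_commute
    finrank_euclideanSpace hT hT_comm
  let e := Fintype.equivFin n
  let U : unitaryGroup n 𝕜 :=
    ⟨_, (EuclideanSpace.basisFun n 𝕜).toMatrix_orthonormalBasis_mem_unitary (b.reindex e.symm)⟩
  refine ⟨U, fun i => ?_⟩
  have eigen : A i * U = U * diagonal fun k => χ (e k) i := by
    ext j k
    rw [mul_diagonal, mul_comm]
    simpa [U, Module.Basis.toMatrix_apply] using! congrArg (· j) (hb (e k) i)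
  rw [Matrix.mul_assoc, eigen, ← Matrix.mul_assoc, ← star_eq_conjTranspose,
    Unitary.coe_star_mul_self, Matrix.one_mul]
  exact isDiag_diagonal _

end JointDiagonalization

section Congruence

theorem exists_ne_zero_isIdempotentElem_mul_mul {μ : ℝ} (hμ : 0 ≤ μ) :
    ∃ s : ℝ, s ≠ 0 ∧ IsIdempotentElem (s * μ * s) := by
  rcases hμ.eq_or_lt with rfl | hpos
  · exact ⟨1, one_ne_zero, by simp [IsIdempotentElem]⟩
  · have hsqrt : √μ ≠ 0 := Real.sqrt_ne_zero'.mpr hpos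
    have normalized : (√μ)⁻¹ * μ * (√μ)⁻¹ = 1 := by
      field_simp
      exact (Real.sq_sqrt hμ).symm
    exact ⟨(√μ)⁻¹, inv_ne_zero hsqrt, normalized ▸ .one⟩

open scoped ComplexOrder

variable {𝕜 n : Type*} [RCLike 𝕜] [Fintype n] {A B E : Matrix n n 𝕜}

theorem ker_mulVecLin_add_le_left (hA : A.PosSemidef) (hB : B.PosSemidef) :
    LinearMap.ker (A + B).mulVecLin ≤ LinearMap.ker A.mulVecLin := fun x hx => by
  have hsum : star x ⬝ᵥ A *ᵥ x + star x ⬝ᵥ B *ᵥ x = 0 := by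
    rw [← dotProduct_add, ← add_mulVec, show (A + B) *ᵥ x = 0 from hx, dotProduct_zero]
  exact (hA.dotProduct_mulVec_zero_iff x).mp ((add_eq_zero_iff_of_nonneg
    (hA.dotProduct_mulVec_nonneg x) (hB.dotProduct_mulVec_nonneg x)).mp hsum).1

variable [DecidableEq n]

theorem exists_isUnit_isIdempotentElem_conjTranspose_mul_mul (hE : E.PosSemidef) :
    ∃ T : Matrix n n 𝕜, IsUnit T ∧ IsIdempotentElem (Tᴴ * E * T) := by
  let μ := hE.isHermitian.eigenvalues
  let U : Matrix n n 𝕜 := hE.isHermitian.eigenvectorUnitary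
  choose s hs_ne hs_idem using fun i =>
    exists_ne_zero_isIdempotentElem_mul_mul (hE.eigenvalues_nonneg i)
  let D : Matrix n n 𝕜 := diagonal fun i => (s i : 𝕜)
  have hD : IsUnit D := isUnit_diagonal.mpr <| Pi.isUnit_iff.mpr fun i => by simpa using hs_ne i
  have spectral : Uᴴ * E * U = diagonal fun i => (μ i : 𝕜) := by
    simpa [Unitary.conjStarAlgAut_apply, star_eq_conjTranspose] using!
      hE.isHermitian.conjStarAlgAut_star_eigenvectorUnitary
  have normalized : (U * D)ᴴ * E * (U * D) = diagonal fun i => ((s i * μ i * s i : ℝ) : 𝕜) :=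
    calc (U * D)ᴴ * E * (U * D) = Dᴴ * (Uᴴ * E * U) * D := by
          simp only [conjTranspose_mul, Matrix.mul_assoc]
      _ = diagonal fun i => ((s i * μ i * s i : ℝ) : 𝕜) := by
          rw [spectral]
          simp [D, diagonal_conjTranspose, diagonal_mul_diagonal, Pi.star_def]
  refine ⟨U * D, Unitary.isUnit_coe.mul hD, ?_⟩
  rw [normalized, IsIdempotentElem, diagonal_mul_diagonal]
  exact congrArg diagonal (funext fun i => by exact_mod_cast (hs_idem i).eq)

theorem exists_isUnit_isDiag_isDiag_of_ker_le (hA : A.IsHermitian) (hE : E.PosSemidef)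
    (hker : LinearMap.ker E.mulVecLin ≤ LinearMap.ker A.mulVecLin) :
    ∃ S : Matrix n n 𝕜, IsUnit S ∧ (Sᴴ * A * S).IsDiag ∧ (Sᴴ * E * S).IsDiag := by
  obtain ⟨T, hT, idem⟩ := exists_isUnit_isIdempotentElem_conjTranspose_mul_mul hE
  set P := Tᴴ * E * T with hP
  set M := Tᴴ * A * T with hM
  have hP_herm : P.IsHermitian := isHermitian_conjTranspose_mul_mul T hE.isHermitian
  have hM_herm : M.IsHermitian := isHermitian_conjTranspose_mul_mul T hA
  have hE_zero : E * (T * (1 - P)) = 0 := by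
    refine hT.star.mul_left_cancel ?_
    simpa [star_eq_conjTranspose, ← Matrix.mul_assoc, ← hP] using idem.mul_one_sub_self
  have hA_zero : A * (T * (1 - P)) = 0 := ext_iff_mulVec.mpr fun v => by
    have : (T * (1 - P)) *ᵥ v ∈ LinearMap.ker E.mulVecLin := by
      rw [LinearMap.mem_ker, mulVecLin_apply, mulVec_mulVec, hE_zero, zero_mulVec]
    rw [← mulVec_mulVec, zero_mulVec]
    exact hker this
  have hMP : M * P = M := by
    have : M * (1 - P) = 0 := by
      rw [hM, Matrix.mul_assoc, Matrix.mul_assoc, hA_zero, Matrix.mul_zero]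
    rwa [mul_sub, mul_one, sub_eq_zero, eq_comm] at this
  have hPM : P * M = M := by
    simpa [hM_herm.eq, hP_herm.eq] using congrArg conjTranspose hMP
  have comm : Commute M P := hMP.trans hPM.symm
  obtain ⟨U, hU⟩ := exists_unitaryGroup_forall_isDiag_of_pairwise_commute
    (A := ![M, P]) (by simp [Fin.forall_fin_two, hM_herm, hP_herm])
    (by simp [Pairwise, Fin.forall_fin_two, comm, comm.symm])
  refine ⟨T * U, hT.mul Unitary.isUnit_coe, ?_, ?_⟩
  · simpa [hM, conjTranspose_mul, Matrix.mul_assoc] using hU 0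
  · simpa [hP, conjTranspose_mul, Matrix.mul_assoc] using hU 1

theorem simultaneous_diagonalization_general (hA : A.PosSemidef) (hB : B.PosSemidef) :
    ∃ S : Matrix n n 𝕜, IsUnit S.det ∧ (Sᴴ * A * S).IsDiag ∧ (Sᴴ * B * S).IsDiag := by
  obtain ⟨S, hS, hSA, hSAB⟩ := exists_isUnit_isDiag_isDiag_of_ker_le hA.isHermitian (hA.add hB)
    (ker_mulVecLin_add_le_left hA hB)
  refine ⟨S, (isUnit_iff_isUnit_det S).mp hS, hSA, ?_⟩
  simpa [mul_add, add_mul] using hSAB.sub hSA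

end Congruence

/-- Under Condition 1 and triviality of the common null space, the matrices
`A1 = Q1 + λ1 Q2` and `A2 = Q1 + λ2 Q2` are simultaneously diagonalizable by a
congruence transformation. -/
theorem simultaneous_diagonalization
    (n : ℕ) (Q1 Q2 : Matrix (Fin n) (Fin n) ℝ)
    (hQ1 : Q1.IsSymm) (hQ2 : Q2.IsSymm)
    (lam1 lam2 : ℝ) (hlt : lam1 < lam2)
    (hcond1 : {lam : ℝ | 0 ≤ lam ∧ (Q1 + lam • Q2).PosSemidef} = Set.Icc lam1 lam2)
    (hnull : ∀ v : Fin n → ℝ, Q1.mulVec v = 0 → Q2.mulVec v = 0 → v = 0)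
    (A1 A2 : Matrix (Fin n) (Fin n) ℝ)
    (hA1 : A1 = Q1 + lam1 • Q2) (hA2 : A2 = Q1 + lam2 • Q2) :
    ∃ S : Matrix (Fin n) (Fin n) ℝ, IsUnit S.det ∧
      (Sᵀ * A1 * S).IsDiag ∧ (Sᵀ * A2 * S).IsDiag := by
  have pos1 : A1.PosSemidef := hA1 ▸ (hcond1.ge (Set.left_mem_Icc.mpr hlt.le)).2
  have pos2 : A2.PosSemidef := hA2 ▸ (hcond1.ge (Set.right_mem_Icc.mpr hlt.le)).2
  simpa only [conjTranspose_eq_transpose_of_trivial] using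
    simultaneous_diagonalization_general pos1 pos2
end

section
/- Suppose {λ ≥ 0 : Q1 + λQ2 is positive semidefinite} = [λ1, λ2] with λ1 < λ2 (Condition 1) and null(Q1) ∩ null(Q2) = {0}. Let A1 = Q1 + λ1·Q2 and A2 = Q1 + λ2·Q2. Then for every nonzero vector d with A2·d = 0, it holds that dᵀA1d > 0. -/
/-!
For positive semidefinite `A₁`, `dᵀ A₁ d = 0` forces `A₁ d = 0`. If also `A₂ d = 0`, then `d` is
killed by two distinct members of the pencil `Q₁ + λ Q₂`, hence by both `Q₁` and `Q₂`, so `d = 0`.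
-/

open Matrix

theorem add_smul_eq_zero_and_add_smul_eq_zero_iff {R M : Type*} [Ring R] [IsDomain R]
    [AddCommGroup M] [Module R M] [Module.IsTorsionFree R M] {s t : R} (hst : s ≠ t) {x y : M} :
    x + s • y = 0 ∧ x + t • y = 0 ↔ x = 0 ∧ y = 0 := by
  refine ⟨fun ⟨hs, ht⟩ ↦ ?_, fun ⟨hx, hy⟩ ↦ by simp [hx, hy]⟩
  have hsmul : s • y = t • y := add_left_cancel (hs.trans ht.symm)
  have hy : y = 0 := by
    by_contra hy
    exact hst (smul_left_injective R hy hsmul)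
  exact ⟨by simpa [hy] using hs, hy⟩

section RCLike

open scoped ComplexOrder

variable {n 𝕜 : Type*} [Fintype n] [RCLike 𝕜]

theorem dotProduct_mulVec_pos_iff_of_posSemidef {A : Matrix n n 𝕜} (hA : A.PosSemidef) (x : n → 𝕜) :
    0 < star x ⬝ᵥ A *ᵥ x ↔ A *ᵥ x ≠ 0 := by
  rw [(hA.dotProduct_mulVec_nonneg x).lt_iff_ne', ne_eq, hA.dotProduct_mulVec_zero_iff]

theorem posQuadForm_on_nullspace_general {Q1 Q2 : Matrix n n 𝕜} {s t : 𝕜} (hst : s ≠ t)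
    (hpsd : (Q1 + s • Q2).PosSemidef) (hnull : ∀ v, Q1 *ᵥ v = 0 → Q2 *ᵥ v = 0 → v = 0)
    {d : n → 𝕜} (hd : d ≠ 0) (htd : (Q1 + t • Q2) *ᵥ d = 0) :
    0 < star d ⬝ᵥ (Q1 + s • Q2) *ᵥ d := by
  rw [dotProduct_mulVec_pos_iff_of_posSemidef hpsd]
  intro hsd
  rw [add_mulVec, smul_mulVec] at hsd htd
  obtain ⟨h1, h2⟩ := (add_smul_eq_zero_and_add_smul_eq_zero_iff hst).mp ⟨hsd, htd⟩
  exact hd (hnull d h1 h2)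

end RCLike

/-- Under Condition 1 and triviality of the common null space, every nonzero
vector `d` in the null space of `A2 = Q1 + λ2 Q2` satisfies `dᵀ A1 d > 0`,
where `A1 = Q1 + λ1 Q2`. -/
theorem posQuadForm_on_nullspace
    (n : ℕ) (Q1 Q2 : Matrix (Fin n) (Fin n) ℝ)
    (hQ1 : Q1.IsSymm) (hQ2 : Q2.IsSymm)
    (lam1 lam2 : ℝ) (hlt : lam1 < lam2)
    (hcond1 : {lam : ℝ | 0 ≤ lam ∧ (Q1 + lam • Q2).PosSemidef} = Set.Icc lam1 lam2)
    (hnull : ∀ v : Fin n → ℝ, Q1.mulVec v = 0 → Q2.mulVec v = 0 → v = 0)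
    (A1 A2 : Matrix (Fin n) (Fin n) ℝ)
    (hA1 : A1 = Q1 + lam1 • Q2) (hA2 : A2 = Q1 + lam2 • Q2) :
    ∀ d : Fin n → ℝ, d ≠ 0 → A2.mulVec d = 0 → 0 < d ⬝ᵥ A1.mulVec d := by
  subst hA1 hA2
  have hpsd : (Q1 + lam1 • Q2).PosSemidef := (hcond1.ge (Set.left_mem_Icc.mpr hlt.le)).2
  exact fun _ ↦ posQuadForm_on_nullspace_general hlt.ne hpsd hnull
end

section
/- Suppose Condition 1 holds (I_PSD = [λ1, λ2] with λ1 < λ2), the Slater condition holds, and null(Q1) ∩ null(Q2) = {0}. Let x* be a global minimizer of H(x) = max{h1(x), h2(x)} with t* = H(x*), and suppose h1(x*) < t* and h2(x*) = t*. Then for any nonzero vector v with A2·v = 0, the quadratic equation in θ, h1(x* + θv) = t*, i.e., (1/2)(vᵀA1v)θ² + (vᵀA1x* + a1ᵀv)θ + h1(x*) − t* = 0 where a1 = b1 + λ1·b2, has a real solution; and for any solution θ̃ of this equation, the point x̃ = x* + θ̃·v is an optimal solution of problem (P): f2(x̃) ≤ 0 and f1(x̃) = inf{f1(x) : f2(x)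 ≤ 0}. -/
open Matrix

/-!
Near the minimax point `x` only `h₂` is active in `max h₁ h₂`, so by convexity `x` minimizes `h₂`
globally. Along a null direction `v` of its Hessian, `h₂` is affine and bounded below, hence
constant, while `h₁`, whose Hessian is positive at `v`, starts below `h₂ x` and grows to meet it.
Where the two values agree, `(μ₂ - μ₁) * f₂ = h₂ - h₁ = 0`, so the constraint is tight; since such a
point also minimizes the Lagrangian `h₂ = f₁ + μ₂ * f₂` and `0 ≤ μ₂`, it is optimal by weak duality.
-/

theorem isMinOn_right_of_isMinOn_max {𝕜 E : Type*} [Field 𝕜] [LinearOrder 𝕜]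
    [IsStrictOrderedRing 𝕜] [AddCommMonoid E] [Module 𝕜 E] {s : Set E} {g h : E → 𝕜} {x : E}
    (hg : ConvexOn 𝕜 s g) (hh : ConvexOn 𝕜 s h) (hxs : x ∈ s)
    (hmin : IsMinOn (fun y => max (g y) (h y)) s x) (hlt : g x < h x) :
    IsMinOn h s x := by
  intro y hys
  by_contra hy
  have hyx : h y < h x := not_le.mp hy
  obtain ⟨ε, hε, hgε⟩ := exists_pos_mul_lt (sub_pos.mpr hlt) |g y - g x|
  obtain ⟨t, ht, ht_lt⟩ := exists_between (lt_min hε one_pos)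
  obtain ⟨htε, ht1⟩ := lt_min_iff.mp ht_lt
  have hgt : (g y - g x) * t < h x - g x := calc
    (g y - g x) * t ≤ |g y - g x| * ε :=
      mul_le_mul (le_abs_self _) htε.le ht.le (abs_nonneg _)
    _ < h x - g x := hgε
  let z := (1 - t) • x + t • y
  have hzs : z ∈ s := hg.1 hxs hys (sub_nonneg.mpr ht1.le) ht.le (sub_add_cancel 1 t)
  have hgz : g z < h x := calc
    g z ≤ (1 - t) * g x + t * g y :=
      hg.2 hxs hys (sub_nonneg.mpr ht1.le) ht.le (sub_add_cancel 1 t)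
    _ < h x := by linarith
  have hhz : h z < h x := calc
    h z ≤ (1 - t) * h x + t * h y :=
      hh.2 hxs hys (sub_nonneg.mpr ht1.le) ht.le (sub_add_cancel 1 t)
    _ < h x := by linarith [mul_lt_mul_of_pos_left hyx ht]
  have hxz : max (g x) (h x) ≤ max (g z) (h z) := hmin hzs
  exact (max_lt hgz hhz).not_ge ((le_max_right _ _).trans hxz)

theorem isLeast_image_of_complementary_slackness {𝕜 α : Type*} [CommRing 𝕜] [PartialOrder 𝕜]
    [IsOrderedRing 𝕜] {f g : α → 𝕜} {μ : 𝕜} {x : α} (hμ : 0 ≤ μ) (hgx : g x ≤ 0)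
    (hslack : μ * g x = 0) (hmin : ∀ y, f x + μ * g x ≤ f y + μ * g y) :
    IsLeast (f '' {y | g y ≤ 0}) (f x) := by
  refine ⟨⟨x, hgx, rfl⟩, ?_⟩
  rintro _ ⟨y, hgy, rfl⟩
  calc
    f x = f x + μ * g x := by rw [hslack, add_zero]
    _ ≤ f y + μ * g y := hmin y
    _ ≤ f y := add_le_of_nonpos_right (mul_nonpos_of_nonneg_of_nonpos hμ hgy)

section QuadraticFunctions

variable {E : Type*} [AddCommGroup E] [Module ℝ E] {f g : E → ℝ} {q r : QuadraticForm ℝ E}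

/-- `f` is a quadratic function with constant Hessian `q`, that is, `f = q / 2 + l + c` for a linear
functional `l` and a constant `c`. The Hessian is encoded by its quadratic form, so that convexity
and behaviour along lines can be read off `q` on any real vector space. -/
def HasHessian (f : E → ℝ) (q : QuadraticForm ℝ E) : Prop :=
  ∃ (l : E →ₗ[ℝ] ℝ) (c : ℝ), ∀ x, f x = (1 / 2) * q x + l x + c

namespace HasHessian

theorem add_const_mul (hf : HasHessian f q) (hg : HasHessian g r) (μ : ℝ) :
    HasHessian (fun x => f x + μ * g x) (q + μ • r) := by
  obtain ⟨l, c, hl⟩ := hf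
  obtain ⟨m, d, hm⟩ := hg
  refine ⟨l + μ • m, c + μ * d, fun x => ?_⟩
  simp only [hl, hm, _root_.add_apply, _root_.smul_apply, LinearMap.add_apply,
    LinearMap.smul_apply, smul_eq_mul]
  ring

theorem exists_apply_add_smul (hf : HasHessian f q) (x v : E) :
    ∃ b : ℝ, ∀ t : ℝ, f (x + t • v) = (1 / 2) * q v * (t * t) + b * t + f x := by
  obtain ⟨l, c, hl⟩ := hf
  refine ⟨(1 / 2) * QuadraticMap.polar q x v + l v, fun t => ?_⟩
  simp only [hl, QuadraticMap.map_add q, QuadraticMap.map_smul, QuadraticMap.polar_smul_right,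
    map_add, map_smul, smul_eq_mul]
  ring

theorem convexOn (hf : HasHessian f q) (hq : ∀ v, 0 ≤ q v) : ConvexOn ℝ Set.univ f := by
  refine ⟨convex_univ, fun x _ y _ s t hs ht hst => ?_⟩
  obtain ⟨b, hb⟩ := hf.exists_apply_add_smul x (y - x)
  have hz : s • x + t • y = x + t • (y - x) := by
    rw [← eq_sub_iff_add_eq] at hst
    rw [hst]
    module
  have hy : f y = (1 / 2) * q (y - x) + b + f x := by
    simpa using hb 1
  have ht_sq : t * t ≤ t := mul_le_of_le_one_left ht (by linarith)
  calc
    f (s • x + t • y) = (1 / 2) * q (y - x) * (t * t) + b * t + f x := by rw [hz, hb]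
    _ ≤ (1 / 2) * q (y - x) * t + b * t + f x := by
      have := hq (y - x)
      gcongr
    _ = s • f x + t • f y := by
      rw [hy, smul_eq_mul, smul_eq_mul, eq_sub_of_add_eq hst]
      ring

theorem apply_add_smul_eq_of_forall_le (hf : HasHessian f q) {x v : E} (hmin : ∀ y, f x ≤ f y)
    (hv : q v = 0) (t : ℝ) : f (x + t • v) = f x := by
  obtain ⟨b, hb⟩ := hf.exists_apply_add_smul x v
  have haffine : ∀ s : ℝ, f (x + s • v) = b * s + f x := fun s => by simp [hb, hv]
  have hb_zero : b = 0 := by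
    linarith [haffine 1, hmin (x + (1 : ℝ) • v), haffine (-1), hmin (x + (-1 : ℝ) • v)]
  rw [haffine, hb_zero, zero_mul, zero_add]

theorem exists_apply_add_smul_eq (hf : HasHessian f q) {x v : E} (hv : 0 < q v) {c : ℝ}
    (hc : f x ≤ c) : ∃ t : ℝ, f (x + t • v) = c := by
  obtain ⟨b, hb⟩ := hf.exists_apply_add_smul x v
  have hdiscrim : 0 ≤ discrim ((1 / 2) * q v) b (f x - c) := by
    have := mul_nonneg hv.le (sub_nonneg.mpr hc)
    unfold discrim
    linarith [mul_self_nonneg b]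
  obtain ⟨t, ht⟩ := exists_quadratic_eq_zero (by positivity)
    ⟨√(discrim ((1 / 2) * q v) b (f x - c)), (Real.mul_self_sqrt hdiscrim).symm⟩
  exact ⟨t, by linarith [hb t]⟩

end HasHessian

end QuadraticFunctions

theorem eq_zero_of_add_smul_eq_zero {K M : Type*} [DivisionRing K] [AddCommGroup M] [Module K M]
    {a b : M} {r s : K} (hrs : r ≠ s) (hr : a + r • b = 0) (hs : a + s • b = 0) :
    a = 0 ∧ b = 0 := by
  have hb : b = 0 := by
    have : (r - s) • b = 0 := by rw [sub_smul, sub_eq_zero, add_left_cancel (hr.trans hs.symm)]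
    exact (smul_eq_zero.mp this).resolve_left (sub_ne_zero.mpr hrs)
  exact ⟨by simpa [hb] using hr, hb⟩

section Matrices

variable {ι : Type*} [Fintype ι]

theorem dotProduct_mulVec_add_smul_pos {A B : Matrix ι ι ℝ} {r s : ℝ} {v : ι → ℝ} (hrs : r ≠ s)
    (hr : (A + r • B).PosSemidef) (hs : (A + s • B) *ᵥ v = 0)
    (hv : ¬(A *ᵥ v = 0 ∧ B *ᵥ v = 0)) : 0 < v ⬝ᵥ (A + r • B) *ᵥ v := by
  refine (hr.dotProduct_mulVec_nonneg v).lt_of_ne' fun hzero => hv ?_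
  have hr_zero : (A + r • B) *ᵥ v = 0 := (hr.dotProduct_mulVec_zero_iff v).mp hzero
  rw [add_mulVec, smul_mulVec] at hr_zero hs
  exact eq_zero_of_add_smul_eq_zero hrs hr_zero hs

variable [DecidableEq ι]

theorem toQuadraticForm'_apply_eq_dotProduct_s7 {R : Type*} [CommRing R] (M : Matrix ι ι R)
    (x : ι → R) : M.toQuadraticForm' x = x ⬝ᵥ M *ᵥ x :=
  toLinearMap₂'_apply' M x x

theorem toQuadraticForm'_add_smul {R : Type*} [CommRing R] (A B : Matrix ι ι R) (r : R) :
    (A + r • B).toQuadraticForm' = A.toQuadraticForm' + r • B.toQuadraticForm' := by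
  ext x
  simp only [toQuadraticForm'_apply_eq_dotProduct_s7, _root_.add_apply, _root_.smul_apply,
    add_mulVec, smul_mulVec, dotProduct_add, dotProduct_smul]

theorem hasHessian_toQuadraticForm' {f : (ι → ℝ) → ℝ} {M : Matrix ι ι ℝ} {b : ι → ℝ} {c : ℝ}
    (hf : ∀ x, f x = (1 / 2) * (x ⬝ᵥ M *ᵥ x) + b ⬝ᵥ x + c) :
    HasHessian f M.toQuadraticForm' :=
  ⟨dotProductBilin ℝ ℝ b, c, fun x => by rw [hf, toQuadraticForm'_apply_eq_dotProduct_s7]; rfl⟩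

theorem toQuadraticForm'_nonneg {M : Matrix ι ι ℝ} (hM : M.PosSemidef) (x : ι → ℝ) :
    0 ≤ M.toQuadraticForm' x :=
  toQuadraticForm'_apply_eq_dotProduct_s7 M x ▸ hM.dotProduct_mulVec_nonneg x

end Matrices

theorem recover_case2_general {E : Type*} [AddCommGroup E] [Module ℝ E] {f₁ f₂ h₁ h₂ : E → ℝ}
    {q₁ q₂ : QuadraticForm ℝ E} {μ₁ μ₂ : ℝ} {x v : E} (hμ : μ₁ ≠ μ₂) (hμ₂ : 0 ≤ μ₂)
    (hh₁ : ∀ y, h₁ y = f₁ y + μ₁ * f₂ y) (hh₂ : ∀ y, h₂ y = f₁ y + μ₂ * f₂ y)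
    (hess₁ : HasHessian h₁ q₁) (hess₂ : HasHessian h₂ q₂)
    (hq₁ : ∀ w, 0 ≤ q₁ w) (hq₂ : ∀ w, 0 ≤ q₂ w)
    (hmin : ∀ y, max (h₁ x) (h₂ x) ≤ max (h₁ y) (h₂ y)) (hlt : h₁ x < h₂ x)
    (hv₁ : 0 < q₁ v) (hv₂ : q₂ v = 0) :
    (∃ θ : ℝ, h₁ (x + θ • v) = h₂ x) ∧
      ∀ θ : ℝ, h₁ (x + θ • v) = h₂ x →
        f₂ (x + θ • v) ≤ 0 ∧ f₁ (x + θ • v) = sInf (f₁ '' {y | f₂ y ≤ 0}) := by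
  refine ⟨hess₁.exists_apply_add_smul_eq hv₁ hlt.le, fun θ hθ₁ => ?_⟩
  have hmin₂ : ∀ y, h₂ x ≤ h₂ y := isMinOn_univ_iff.mp <|
    isMinOn_right_of_isMinOn_max (hess₁.convexOn hq₁) (hess₂.convexOn hq₂) (Set.mem_univ x)
      (isMinOn_univ_iff.mpr hmin) hlt
  have hθ₂ : h₂ (x + θ • v) = h₂ x := hess₂.apply_add_smul_eq_of_forall_le hmin₂ hv₂ θ
  have hf₂ : f₂ (x + θ • v) = 0 := by
    have : μ₁ * f₂ (x + θ • v) = μ₂ * f₂ (x + θ • v) := by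
      linarith [hh₁ (x + θ • v), hh₂ (x + θ • v)]
    exact (mul_eq_mul_right_iff.mp this).resolve_left hμ
  have hleast : IsLeast (f₁ '' {y | f₂ y ≤ 0}) (f₁ (x + θ • v)) :=
    isLeast_image_of_complementary_slackness hμ₂ hf₂.le (by rw [hf₂, mul_zero]) fun y => by
      rw [← hh₂, ← hh₂, hθ₂]
      exact hmin₂ y
  exact ⟨hf₂.le, hleast.csInf_eq.symm⟩

/-- Recovery of an optimal solution of the GTRS (P) from a minimizer `x*` of the
minimax reformulation in the case `h1(x*) < t*` and `h2(x*) = t*`: for any nonzero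
`v` in the null space of `A2`, the quadratic equation `h1(x* + θ v) = t*` has a real
solution, and every such solution yields an optimal solution `x* + θ v` of (P). -/
theorem recover_case2
    (n : ℕ) (Q1 Q2 : Matrix (Fin n) (Fin n) ℝ)
    (hQ1 : Q1.IsSymm) (hQ2 : Q2.IsSymm)
    (b1 b2 : Fin n → ℝ) (c : ℝ)
    (f1 f2 : (Fin n → ℝ) → ℝ)
    (hf1 : ∀ x, f1 x = (1 / 2) * (x ⬝ᵥ Q1.mulVec x) + b1 ⬝ᵥ x)
    (hf2 : ∀ x, f2 x = (1 / 2) * (x ⬝ᵥ Q2.mulVec x) + b2 ⬝ᵥ x + c)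
    (hslater : ∃ xbar : Fin n → ℝ, f2 xbar < 0)
    (hnull : ∀ v : Fin n → ℝ, Q1.mulVec v = 0 → Q2.mulVec v = 0 → v = 0)
    (lam1 lam2 : ℝ) (hlt : lam1 < lam2)
    (hcond1 : {lam : ℝ | 0 ≤ lam ∧ (Q1 + lam • Q2).PosSemidef} = Set.Icc lam1 lam2)
    (A1 A2 : Matrix (Fin n) (Fin n) ℝ)
    (hA1 : A1 = Q1 + lam1 • Q2) (hA2 : A2 = Q1 + lam2 • Q2)
    (h1 h2 H : (Fin n → ℝ) → ℝ)
    (hh1 : ∀ x, h1 x = f1 x + lam1 * f2 x)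
    (hh2 : ∀ x, h2 x = f1 x + lam2 * f2 x)
    (hH : ∀ x, H x = max (h1 x) (h2 x))
    (xstar : Fin n → ℝ) (hmin : ∀ y, H xstar ≤ H y)
    (tstar : ℝ) (htstar : tstar = H xstar)
    (hc1 : h1 xstar < tstar) (hc2 : h2 xstar = tstar) :
    ∀ v : Fin n → ℝ, v ≠ 0 → A2.mulVec v = 0 →
      (∃ θ : ℝ, h1 (xstar + θ • v) = tstar) ∧
      (∀ θ : ℝ, h1 (xstar + θ • v) = tstar →
        f2 (xstar + θ • v) ≤ 0 ∧
        f1 (xstar + θ • v) = sInf (f1 '' {x | f2 x ≤ 0})) := by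
  have hpsd : ∀ lam ∈ Set.Icc lam1 lam2, 0 ≤ lam ∧ (Q1 + lam • Q2).PosSemidef := hcond1.ge
  obtain ⟨-, hpsd1⟩ := hpsd lam1 (Set.left_mem_Icc.mpr hlt.le)
  obtain ⟨hlam2, hpsd2⟩ := hpsd lam2 (Set.right_mem_Icc.mpr hlt.le)
  have hess : ∀ lam, HasHessian (fun x => f1 x + lam * f2 x) (Q1 + lam • Q2).toQuadraticForm' :=
    fun lam => toQuadraticForm'_add_smul Q1 Q2 lam ▸
      (hasHessian_toQuadraticForm' (c := 0) (by simpa using hf1)).add_const_mul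
        (hasHessian_toQuadraticForm' hf2) lam
  subst hA1 hA2 hc2
  intro v hv hA2v
  have hv1 : 0 < v ⬝ᵥ (Q1 + lam1 • Q2) *ᵥ v :=
    dotProduct_mulVec_add_smul_pos hlt.ne hpsd1 hA2v fun hQ => hv (hnull v hQ.1 hQ.2)
  exact recover_case2_general hlt.ne hlam2 hh1 hh2 (funext hh1 ▸ hess lam1) (funext hh2 ▸ hess lam2)
    (toQuadraticForm'_nonneg hpsd1) (toQuadraticForm'_nonneg hpsd2) (by simpa only [hH] using hmin)
    hc1 (by rwa [toQuadraticForm'_apply_eq_dotProduct_s7])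
    (by rw [toQuadraticForm'_apply_eq_dotProduct_s7, hA2v, dotProduct_zero])
end

section
/- Suppose λ0 ≥ 0 is such that Q1 + λ0·Q2 is positive definite, and let x(λ0) = −(Q1 + λ0·Q2)⁻¹(b1 + λ0·b2). If f2(x(λ0)) = 0, then x(λ0) is an optimal solution of problem (P): f2(x(λ0)) ≤ 0 and f1(x(λ0)) = inf{f1(x) : f2(x) ≤ 0}. -/
open Matrix

/-!
Since `lam0 ≥ 0` and `lam0 * f2 x0 = 0`, the Lagrangian `f1 + lam0 * f2` is at most `f1` on the
feasible set and agrees with `f1` at `x0`, so a minimizer `x0` of the Lagrangian minimizes `f1` over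
the feasible set. The Lagrangian is a convex quadratic function, which attains its global minimum
wherever its gradient `(Q1 + lam0 • Q2) *ᵥ x + (b1 + lam0 • b2)` vanishes.
-/

theorem isMinOn_of_isMinOn_add_mul {α R : Type*} [Ring R] [PartialOrder R] [IsOrderedRing R]
    {f g : α → R} {lam : R} {x₀ : α} (hlam : 0 ≤ lam) (hslack : lam * g x₀ = 0)
    (hmin : IsMinOn (fun x ↦ f x + lam * g x) {x | g x ≤ 0} x₀) :
    IsMinOn f {x | g x ≤ 0} x₀ := by
  rw [isMinOn_iff] at hmin ⊢
  intro x hx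
  calc
    f x₀ = f x₀ + lam * g x₀ := by rw [hslack, add_zero]
    _ ≤ f x + lam * g x := hmin x hx
    _ ≤ f x := add_le_of_nonpos_right (mul_nonpos_of_nonneg_of_nonpos hlam hx)

section CommRing

variable {ι R : Type*} [Fintype ι] [CommRing R]

theorem dotProduct_mulVec_comm_of_isSymm {A : Matrix ι ι R} (hA : A.IsSymm) (x y : ι → R) :
    x ⬝ᵥ A *ᵥ y = y ⬝ᵥ A *ᵥ x := by
  rw [← dotProduct_transpose_mulVec, hA.eq]

theorem mulVec_neg_inv_mulVec [DecidableEq ι] {A : Matrix ι ι R} (hA : IsUnit A) (b : ι → R) :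
    A *ᵥ (-(A⁻¹ *ᵥ b)) = -b := by
  rw [mulVec_neg, mulVec_mulVec, mul_nonsing_inv A ((isUnit_iff_isUnit_det A).1 hA), one_mulVec]

end CommRing

section QuadraticFun

variable {ι 𝕜 : Type*} [Fintype ι] [Field 𝕜]

/-- The inhomogeneous quadratic function `x ↦ ½ xᵀ Q x + bᵀ x + c`, of which both the objective
and the constraint of (P) are instances. The matrix `Q` is not required to be symmetric. -/
def quadraticFun (Q : Matrix ι ι 𝕜) (b : ι → 𝕜) (c : 𝕜) (x : ι → 𝕜) : 𝕜 :=
  (1 / 2) * (x ⬝ᵥ Q *ᵥ x) + b ⬝ᵥ x + c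

theorem quadraticFun_add_mul_quadraticFun (Q₁ Q₂ : Matrix ι ι 𝕜) (b₁ b₂ : ι → 𝕜) (c₁ c₂ lam : 𝕜)
    (x : ι → 𝕜) :
    quadraticFun Q₁ b₁ c₁ x + lam * quadraticFun Q₂ b₂ c₂ x =
      quadraticFun (Q₁ + lam • Q₂) (b₁ + lam • b₂) (c₁ + lam * c₂) x := by
  simp only [quadraticFun, add_mulVec, smul_mulVec, dotProduct_add, dotProduct_smul,
    add_dotProduct, smul_dotProduct, smul_eq_mul]
  ring

theorem quadraticFun_add [NeZero (2 : 𝕜)] {A : Matrix ι ι 𝕜} (hA : A.IsSymm) (b : ι → 𝕜) (c : 𝕜)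
    (x d : ι → 𝕜) :
    quadraticFun A b c (x + d) =
      quadraticFun A b c x + (A *ᵥ x + b) ⬝ᵥ d + (1 / 2) * (d ⬝ᵥ A *ᵥ d) := by
  simp only [quadraticFun, mulVec_add, dotProduct_add, add_dotProduct,
    dotProduct_mulVec_comm_of_isSymm hA x d, dotProduct_comm (A *ᵥ x) d]
  field

variable [LinearOrder 𝕜] [IsStrictOrderedRing 𝕜] [StarRing 𝕜] [TrivialStar 𝕜]

theorem isMinOn_quadraticFun_of_posSemidef {A : Matrix ι ι 𝕜} (hA : A.PosSemidef) {b : ι → 𝕜}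
    (c : 𝕜) {x₀ : ι → 𝕜} (hgrad : A *ᵥ x₀ + b = 0) :
    IsMinOn (quadraticFun A b c) Set.univ x₀ := by
  refine isMinOn_univ_iff.2 fun x ↦ ?_
  have hsymm : A.IsSymm := isHermitian_iff_isSymm.1 hA.isHermitian
  have hcurv : 0 ≤ (x - x₀) ⬝ᵥ A *ᵥ (x - x₀) := by
    simpa only [star_trivial] using hA.dotProduct_mulVec_nonneg (x - x₀)
  calc
    quadraticFun A b c x₀
      ≤ quadraticFun A b c x₀ + (1 / 2) * ((x - x₀) ⬝ᵥ A *ᵥ (x - x₀)) :=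
        le_add_of_nonneg_right (by positivity)
    _ = quadraticFun A b c (x₀ + (x - x₀)) := by
        rw [quadraticFun_add hsymm, hgrad, zero_dotProduct, add_zero]
    _ = quadraticFun A b c x := by rw [add_sub_cancel]

theorem stationary_point_optimal_general {Q₁ Q₂ : Matrix ι ι 𝕜} {b₁ b₂ : ι → 𝕜} {c₁ c₂ lam : 𝕜}
    {x₀ : ι → 𝕜} (hlam : 0 ≤ lam) (hpsd : (Q₁ + lam • Q₂).PosSemidef)
    (hgrad : (Q₁ + lam • Q₂) *ᵥ x₀ + (b₁ + lam • b₂) = 0)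
    (hfeas : quadraticFun Q₂ b₂ c₂ x₀ ≤ 0) (hslack : lam * quadraticFun Q₂ b₂ c₂ x₀ = 0) :
    IsLeast (quadraticFun Q₁ b₁ c₁ '' {x | quadraticFun Q₂ b₂ c₂ x ≤ 0})
      (quadraticFun Q₁ b₁ c₁ x₀) := by
  have hLagrangian : IsMinOn (fun x ↦ quadraticFun Q₁ b₁ c₁ x + lam * quadraticFun Q₂ b₂ c₂ x)
      Set.univ x₀ := by
    simpa only [quadraticFun_add_mul_quadraticFun] using
      isMinOn_quadraticFun_of_posSemidef hpsd (c₁ + lam * c₂) hgrad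
  have hmin := isMinOn_of_isMinOn_add_mul hlam hslack (hLagrangian.on_subset (Set.subset_univ _))
  exact ⟨Set.mem_image_of_mem _ hfeas, Set.forall_mem_image.2 (isMinOn_iff.1 hmin)⟩

end QuadraticFun

/-- If `Q1 + λ0 Q2` is positive definite with `λ0 ≥ 0` and the stationary point
`x(λ0) = -(Q1 + λ0 Q2)⁻¹ (b1 + λ0 b2)` satisfies `f2(x(λ0)) = 0`, then `x(λ0)` is an
optimal solution of the GTRS (P). -/
theorem stationary_point_optimal
    (n : ℕ) (Q1 Q2 : Matrix (Fin n) (Fin n) ℝ)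
    (hQ1 : Q1.IsSymm) (hQ2 : Q2.IsSymm)
    (b1 b2 : Fin n → ℝ) (c : ℝ)
    (f1 f2 : (Fin n → ℝ) → ℝ)
    (hf1 : ∀ x, f1 x = (1 / 2) * (x ⬝ᵥ Q1.mulVec x) + b1 ⬝ᵥ x)
    (hf2 : ∀ x, f2 x = (1 / 2) * (x ⬝ᵥ Q2.mulVec x) + b2 ⬝ᵥ x + c)
    (lam0 : ℝ) (hlam0 : 0 ≤ lam0) (hpd : (Q1 + lam0 • Q2).PosDef)
    (x0 : Fin n → ℝ) (hx0 : x0 = -((Q1 + lam0 • Q2)⁻¹.mulVec (b1 + lam0 • b2)))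
    (hzero : f2 x0 = 0) :
    f2 x0 ≤ 0 ∧ f1 x0 = sInf (f1 '' {x | f2 x ≤ 0}) := by
  obtain rfl : f1 = quadraticFun Q1 b1 0 := funext fun x ↦ (hf1 x).trans (add_zero _).symm
  obtain rfl : f2 = quadraticFun Q2 b2 c := funext hf2
  have hgrad : (Q1 + lam0 • Q2) *ᵥ x0 + (b1 + lam0 • b2) = 0 := by
    rw [hx0, mulVec_neg_inv_mulVec hpd.isUnit, neg_add_cancel]
  have hleast := stationary_point_optimal_general (c₁ := 0) hlam0 hpd.posSemidef hgrad hzero.le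
    (mul_eq_zero_of_right lam0 hzero)
  exact ⟨hzero.le, hleast.csInf_eq.symm⟩
end

section
/- Let x ∈ ℝⁿ with h1(x) = h2(x), and write g1 = ∇h1(x), g2 = ∇h2(x). If g1ᵀg2 ≥ g2ᵀg2 (so that g2 is the gradient with smaller norm and the inner product condition of Theorem 3.1 case (a) holds), then the point x⁺ = x − (1/L)·g2 satisfies H(x) − H(x⁺) ≥ (1/(2L))‖g2‖² = (L/2)‖x − x⁺‖². -/
open Matrix RealInnerProductSpace

/-!
With `L` at least the top eigenvalue of both matrices, each `hᵢ` is bounded above by its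
linearization at `x` plus `L / 2 * ‖y - x‖ ^ 2`. For the step `y - x = -(1 / L) • d` this bound
decreases by `(1 / L) * ⟪gᵢ, d⟫ - ‖d‖ ^ 2 / (2 * L)`, that is by at least `‖d‖ ^ 2 / (2 * L)`, as
soon as `⟪d, d⟫ ≤ ⟪gᵢ, d⟫`. With `d = g2` this holds for both functions, so both, and hence their
maximum, decrease by at least that amount.
-/

section Spectral

variable {𝕜 E ι : Type*} [RCLike 𝕜] [NormedAddCommGroup E] [InnerProductSpace 𝕜 E] [Fintype ι]

theorem inner_apply_of_eigenbasis (b : OrthonormalBasis ι 𝕜 E) {T : E →ₗ[𝕜] E} {μ : ι → 𝕜}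
    (hT : ∀ i, T (b i) = μ i • b i) (i : ι) (v : E) :
    inner 𝕜 (b i) (T v) = μ i * inner 𝕜 (b i) v := by
  classical
  conv_lhs => rw [← b.sum_repr' v]
  simp [hT, inner_sum, inner_smul_right, b.inner_eq_ite, mul_comm]

theorem re_inner_apply_le_of_eigenbasis (b : OrthonormalBasis ι 𝕜 E) {T : E →ₗ[𝕜] E} {μ : ι → ℝ}
    (hT : ∀ i, T (b i) = (μ i : 𝕜) • b i) {L : ℝ} (hμ : ∀ i, μ i ≤ L) (v : E) :
    RCLike.re (inner 𝕜 v (T v)) ≤ L * ‖v‖ ^ 2 :=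
  calc RCLike.re (inner 𝕜 v (T v))
    _ = ∑ i, μ i * ‖inner 𝕜 (b i) v‖ ^ 2 := by
        rw [← b.sum_inner_mul_inner, map_sum]
        refine Finset.sum_congr rfl fun i _ => ?_
        rw [inner_apply_of_eigenbasis b hT, mul_left_comm, RCLike.re_ofReal_mul,
          inner_mul_symm_re_eq_norm, norm_mul, norm_inner_symm v, sq]
    _ ≤ ∑ i, L * ‖inner 𝕜 (b i) v‖ ^ 2 := by gcongr with i; exact hμ i
    _ = L * ‖v‖ ^ 2 := by rw [← Finset.mul_sum, b.sum_sq_norm_inner_right]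

theorem re_inner_toEuclideanLin_le_iSup_eigenvalues [DecidableEq ι] {A : Matrix ι ι 𝕜}
    (hA : A.IsHermitian) (v : EuclideanSpace 𝕜 ι) :
    RCLike.re (inner 𝕜 v (A.toEuclideanLin v)) ≤ (⨆ i, hA.eigenvalues i) * ‖v‖ ^ 2 := by
  refine re_inner_apply_le_of_eigenbasis hA.eigenvectorBasis (fun i => ?_)
    (le_ciSup (Set.finite_range hA.eigenvalues).bddAbove) v
  ext j
  simpa [Matrix.toLpLin_apply, RCLike.real_smul_eq_coe_mul] using
    congrFun (hA.mulVec_eigenvectorBasis i) j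

end Spectral

section QuadraticMajorant

variable {E : Type*} [NormedAddCommGroup E] [InnerProductSpace ℝ E]

/-- The upper bound of the descent lemma at the point `x`, satisfied by every function with
`L`-Lipschitz gradient. It carries all that a gradient step at `x` uses about `f`; when `f` is
differentiable at `x`, it forces `g` to be the gradient there. -/
def HasQuadraticMajorantAt (f : E → ℝ) (g x : E) (L : ℝ) : Prop :=
  ∀ y, f y ≤ f x + ⟪g, y - x⟫ + L / 2 * ‖y - x‖ ^ 2

theorem half_mul_norm_one_div_smul_sq {L : ℝ} (hL : L ≠ 0) (d : E) :
    L / 2 * ‖(1 / L) • d‖ ^ 2 = 1 / (2 * L) * ‖d‖ ^ 2 := by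
  rw [norm_smul, mul_pow, Real.norm_eq_abs, sq_abs]
  field_simp

theorem HasQuadraticMajorantAt.apply_sub_smul_le {f : E → ℝ} {g x d : E} {L : ℝ}
    (hf : HasQuadraticMajorantAt f g x L) (hL : 0 < L) (hd : ⟪d, d⟫ ≤ ⟪g, d⟫) :
    f (x - (1 / L) • d) ≤ f x - 1 / (2 * L) * ‖d‖ ^ 2 := by
  have hstep : x - (1 / L) • d - x = -((1 / L) • d) := by abel
  calc f (x - (1 / L) • d)
    _ ≤ f x + ⟪g, -((1 / L) • d)⟫ + L / 2 * ‖-((1 / L) • d)‖ ^ 2 := hstep ▸ hf _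
    _ = f x - 1 / L * ⟪g, d⟫ + 1 / (2 * L) * ‖d‖ ^ 2 := by
        rw [inner_neg_right, real_inner_smul_right, norm_neg,
          half_mul_norm_one_div_smul_sq hL.ne', sub_eq_add_neg]
    _ ≤ f x - 1 / L * ‖d‖ ^ 2 + 1 / (2 * L) * ‖d‖ ^ 2 := by
        rw [real_inner_self_eq_norm_sq] at hd
        gcongr
    _ = f x - 1 / (2 * L) * ‖d‖ ^ 2 := by
        field_simp
        ring

theorem hasQuadraticMajorantAt_quadratic_of_isSymmetric {T : E →ₗ[ℝ] E} (hT : T.IsSymmetric) {L : ℝ}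
    (hTL : ∀ v, ⟪v, T v⟫ ≤ L * ‖v‖ ^ 2) {f : E → ℝ} {a : E} {r : ℝ}
    (hf : ∀ y, f y = (1 / 2) * ⟪y, T y⟫ + ⟪a, y⟫ + r) (x : E) :
    HasQuadraticMajorantAt f (T x + a) x L := by
  intro y
  have taylor : f y = f x + ⟪T x + a, y - x⟫ + 1 / 2 * ⟪y - x, T (y - x)⟫ := by
    simp only [hf, map_sub, inner_sub_left, inner_sub_right, inner_add_left, hT x y,
      real_inner_comm (T x)]
    ring
  linarith [hTL (y - x)]

theorem hasQuadraticMajorantAt_quadratic_of_isHermitian {ι : Type*} [Fintype ι] [DecidableEq ι]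
    {A : Matrix ι ι ℝ} (hA : A.IsHermitian) {L : ℝ} (hL : (⨆ i, hA.eigenvalues i) ≤ L)
    {f : EuclideanSpace ℝ ι → ℝ} {a : EuclideanSpace ℝ ι} {r : ℝ}
    (hf : ∀ y, f y = (1 / 2) * ⟪y, A.toEuclideanLin y⟫ + ⟪a, y⟫ + r) (x : EuclideanSpace ℝ ι) :
    HasQuadraticMajorantAt f (A.toEuclideanLin x + a) x L :=
  hasQuadraticMajorantAt_quadratic_of_isSymmetric (Matrix.isSymmetric_toEuclideanLin_iff.2 hA)
    (fun v => (re_inner_toEuclideanLin_le_iSup_eigenvalues hA v).trans (by gcongr)) hf x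

theorem sufficient_descent_kink_smaller_gradient_general {f₁ f₂ : E → ℝ} {g₁ g₂ x d : E} {L : ℝ}
    (hL : 0 < L) (hf₁ : HasQuadraticMajorantAt f₁ g₁ x L) (hf₂ : HasQuadraticMajorantAt f₂ g₂ x L)
    (hd₁ : ⟪d, d⟫ ≤ ⟪g₁, d⟫) (hd₂ : ⟪d, d⟫ ≤ ⟪g₂, d⟫) :
    1 / (2 * L) * ‖d‖ ^ 2 = L / 2 * ‖x - (x - (1 / L) • d)‖ ^ 2 ∧
      1 / (2 * L) * ‖d‖ ^ 2 ≤
        max (f₁ x) (f₂ x) - max (f₁ (x - (1 / L) • d)) (f₂ (x - (1 / L) • d)) := by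
  constructor
  · rw [sub_sub_cancel, half_mul_norm_one_div_smul_sq hL.ne']
  · rw [le_sub_comm, ← max_sub_sub_right]
    exact max_le_max (hf₁.apply_sub_smul_le hL hd₁) (hf₂.apply_sub_smul_le hL hd₂)

end QuadraticMajorant

/-- Sufficient descent at a kink point in the case `g1ᵀg2 ≥ g2ᵀg2`: the step
`x⁺ = x - (1/L) g2` satisfies `H(x) - H(x⁺) ≥ (1/(2L))‖g2‖² = (L/2)‖x - x⁺‖²`. -/
theorem sufficient_descent_kink_smaller_gradient
    (n : ℕ) [NeZero n] (A1 A2 : Matrix (Fin n) (Fin n) ℝ)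
    (hA1s : A1.IsSymm) (hA2s : A2.IsSymm)
    (hA1 : A1.PosSemidef) (hA2 : A2.PosSemidef)
    (a1 a2 : EuclideanSpace ℝ (Fin n)) (r1 r2 : ℝ)
    (h1 h2 H : EuclideanSpace ℝ (Fin n) → ℝ)
    (hh1 : ∀ x, h1 x = (1 / 2) * ⟪x, A1.toEuclideanLin x⟫ + ⟪a1, x⟫ + r1)
    (hh2 : ∀ x, h2 x = (1 / 2) * ⟪x, A2.toEuclideanLin x⟫ + ⟪a2, x⟫ + r2)
    (hH : ∀ x, H x = max (h1 x) (h2 x))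
    (L : ℝ)
    (hL : L = max (⨆ i, hA1.1.eigenvalues i) (⨆ i, hA2.1.eigenvalues i))
    (hLpos : 0 < L)
    (x : EuclideanSpace ℝ (Fin n)) (heq : h1 x = h2 x)
    (g1 g2 : EuclideanSpace ℝ (Fin n))
    (hg1 : g1 = A1.toEuclideanLin x + a1)
    (hg2 : g2 = A2.toEuclideanLin x + a2)
    (hip : ⟪g2, g2⟫ ≤ ⟪g1, g2⟫)
    (xplus : EuclideanSpace ℝ (Fin n)) (hxplus : xplus = x - (1 / L) • g2) :
    (1 / (2 * L)) * ‖g2‖ ^ 2 = (L / 2) * ‖x - xplus‖ ^ 2 ∧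
    (1 / (2 * L)) * ‖g2‖ ^ 2 ≤ H x - H xplus := by
  subst hg1 hg2 hxplus
  simpa only [hH] using sufficient_descent_kink_smaller_gradient_general hLpos
    (hasQuadraticMajorantAt_quadratic_of_isHermitian hA1.1 (hL ▸ le_max_left _ _) hh1 x)
    (hasQuadraticMajorantAt_quadratic_of_isHermitian hA2.1 (hL ▸ le_max_right _ _) hh2 x) hip le_rfl
end

section
/- Let H : ℝⁿ → ℝ be a function with global minimizer x* (H(x*) ≤ H(y) for all y), and let L > 0, C > 0. Suppose x ∈ ℝⁿ, d ∈ ℝⁿ, and x⁺ = x − (1/L)·d satisfy the sufficient descent property H(x) − H(x⁺) ≥ (L/2)‖x − x⁺‖² and the KL inequality (H(x) − H(x*))^{1/2} ≤ C·‖d‖. Then H(x⁺) − H(x*) ≤ (1 − 1/(2C²L))·(H(x) − H(x*)); in particular, iterating such steps yields linear convergence of the function values at rate (1 − 1/(2C²L)) per step. -/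
/-!
With step size `1 / L`, the sufficient descent property is a decrease of the function value by at
least `‖d‖² / (2 L)`. The KL inequality with exponent `1 / 2`, squared, is the
Polyak–Łojasiewicz inequality: the gap to the target value is at most `C² ‖d‖²`. A step therefore
removes at least the fraction `1 / (2 C² L)` of the gap.
-/

theorem div_two_mul_norm_sub_sub_smul_sq {E : Type*} [SeminormedAddCommGroup E] [NormedSpace ℝ E]
    {L : ℝ} (x d : E) :
    L / 2 * ‖x - (x - (1 / L) • d)‖ ^ 2 = ‖d‖ ^ 2 / (2 * L) := by
  rw [sub_sub_cancel, norm_smul, mul_pow, Real.norm_eq_abs, sq_abs]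
  field_simp

theorem le_one_sub_mul_of_sq_div_le_sub {𝕜 : Type*} [Field 𝕜] [LinearOrder 𝕜]
    [IsStrictOrderedRing 𝕜] {L C g a b : 𝕜} (hL : 0 < L) (hC : C ≠ 0)
    (hdescent : g ^ 2 / (2 * L) ≤ a - b) (hPL : a ≤ (C * g) ^ 2) :
    b ≤ (1 - 1 / (2 * C ^ 2 * L)) * a := by
  have hfraction : 1 / (2 * C ^ 2 * L) * a ≤ a - b :=
    calc
      1 / (2 * C ^ 2 * L) * a ≤ 1 / (2 * C ^ 2 * L) * (C * g) ^ 2 := by gcongr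
      _ = g ^ 2 / (2 * L) := by field_simp
      _ ≤ a - b := hdescent
  linarith

theorem linear_convergence_step_general {E : Type*} [SeminormedAddCommGroup E] [NormedSpace ℝ E]
    {H : E → ℝ} {c L C : ℝ} (hL : 0 < L) (hC : C ≠ 0) {x d xplus : E}
    (hxplus : xplus = x - (1 / L) • d)
    (hdescent : L / 2 * ‖x - xplus‖ ^ 2 ≤ H x - H xplus)
    (hPL : H x - c ≤ (C * ‖d‖) ^ 2) :
    H xplus - c ≤ (1 - 1 / (2 * C ^ 2 * L)) * (H x - c) := by
  refine le_one_sub_mul_of_sq_div_le_sub hL hC ?_ hPL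
  subst hxplus
  rwa [sub_sub_sub_cancel_right, ← div_two_mul_norm_sub_sub_smul_sq x d]

/-- One step of linear convergence: if the step `x⁺ = x - (1/L) d` satisfies the
sufficient descent property `H(x) - H(x⁺) ≥ (L/2)‖x - x⁺‖²` and the KL inequality
`(H(x) - H(x*))^{1/2} ≤ C ‖d‖` at a global minimizer `x*` of `H`, then
`H(x⁺) - H(x*) ≤ (1 - 1/(2C²L)) (H(x) - H(x*))`. -/
theorem linear_convergence_step
    (n : ℕ) (H : EuclideanSpace ℝ (Fin n) → ℝ)
    (xstar : EuclideanSpace ℝ (Fin n)) (hmin : ∀ y, H xstar ≤ H y)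
    (L C : ℝ) (hL : 0 < L) (hC : 0 < C)
    (x d xplus : EuclideanSpace ℝ (Fin n))
    (hxplus : xplus = x - (1 / L) • d)
    (hdescent : (L / 2) * ‖x - xplus‖ ^ 2 ≤ H x - H xplus)
    (hKL : Real.sqrt (H x - H xstar) ≤ C * ‖d‖) :
    H xplus - H xstar ≤ (1 - 1 / (2 * C ^ 2 * L)) * (H x - H xstar) := by
  exact linear_convergence_step_general hL hC.ne' hxplus hdescent (Real.sqrt_le_iff.mp hKL).2
end

section
/- For ρ > 0 define ∂H_ρ(x) = {∇h1(x)} if h1(x) − h2(x) > ρ, ∂H_ρ(x) = {∇h2(x)} if h2(x) − h1(x) > ρ, and ∂H_ρ(x) = {α∇h1(x) + (1−α)∇h2(x) : α ∈ [0, 1]} if |h1(x) − h2(x)| ≤ ρ; a point x is a (ρ, δ)-critical point of H if there exists g ∈ ∂H_ρ(x) with ‖g‖ < δ. Suppose (ρ^t, δ^t) are positive pairs with (ρ^t, δ^t) → (0, 0) as t → ∞, {x_k} is a sequence in ℝⁿ, and for each t ≥ 1 there exists a positive integer K(t) such that x_k is a (ρ^t, δ^t)-critical point of H for all k ≥ K(t).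 Then every accumulation point x̄ of {x_k} is a critical point of H, i.e., 0 ∈ ∂H(x̄). -/
open Matrix RealInnerProductSpace

/-!
For `ρ ≥ 0`, membership `g ∈ ∂H_ρ(x)` is a conjunction of closed conditions on `(ρ, x, g)`:
`g` lies on the segment `[∇h₁(x), ∇h₂(x)]`; either `h₁(x) ≤ h₂(x) + ρ` or `g = ∇h₁(x)`; and
symmetrically. Hence the graph of the enlarged subdifferential is closed. The near-critical
subgradients provided by the hypothesis tend to `0` along points tending to `x̄`, with enlargement
parameters tending to `0`, so the limit `(0, x̄, 0)` lies in this graph. Since `∂H_0 = ∂H`, this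
says `0 ∈ ∂H(x̄)`.
-/

section ClosedGraph

open Set Filter Topology Gradient

theorem isClosed_setOf_mem_segment {X F : Type*} [TopologicalSpace X] [AddCommGroup F] [Module ℝ F]
    [TopologicalSpace F] [ContinuousAdd F] [ContinuousSMul ℝ F] [T2Space F] {u v w : X → F}
    (hu : Continuous u) (hv : Continuous v) (hw : Continuous w) :
    IsClosed {p | w p ∈ segment ℝ (u p) (v p)} := by
  have hproj : {p | w p ∈ segment ℝ (u p) (v p)} = Prod.snd ''
      {q : Icc (0 : ℝ) 1 × X | (1 - (q.1 : ℝ)) • u q.2 + (q.1 : ℝ) • v q.2 = w q.2} := by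
    ext p
    simp [segment_eq_image]
  rw [hproj]
  exact isClosedMap_snd_of_compactSpace _ (isClosed_eq (by fun_prop) (by fun_prop))

theorem curry_neBot {ι κ : Type*} (l : Filter ι) (m : Filter κ) [l.NeBot] [m.NeBot] :
    (l.curry m).NeBot :=
  ⟨by simp [← empty_mem_iff_bot, mem_curry_iff]⟩

variable {E : Type*} [NormedAddCommGroup E] [InnerProductSpace ℝ E] [CompleteSpace E]
  {h₁ h₂ : E → ℝ}

theorem continuous_gradient_of_contDiff {f : E → ℝ} (hf : ContDiff ℝ 1 f) : Continuous (∇ f) :=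
  (InnerProductSpace.toDual ℝ E).symm.continuous.comp (hf.continuous_fderiv one_ne_zero)

/-- The enlarged subdifferential `∂H_ρ(x)` of `H = max {h₁, h₂}`; the subdifferential `∂H(x)` itself
is the case `ρ = 0`. Meaningful for differentiable `h₁` and `h₂` only, as `∇ hᵢ x` is the junk value
`0` elsewhere. -/
noncomputable def maxSubdiff (h₁ h₂ : E → ℝ) (ρ : ℝ) (x : E) : Set E :=
  if h₂ x + ρ < h₁ x then {∇ h₁ x}
  else if h₁ x + ρ < h₂ x then {∇ h₂ x}
  else segment ℝ (∇ h₁ x) (∇ h₂ x)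

/-- `x` is a `(ρ, δ)`-critical point of `H = max {h₁, h₂}`. -/
def IsApproxCritical (h₁ h₂ : E → ℝ) (ρ δ : ℝ) (x : E) : Prop :=
  ∃ g ∈ maxSubdiff h₁ h₂ ρ x, ‖g‖ < δ

theorem maxSubdiff_eq_ite {g₁ g₂ : E → E} (hg₁ : ∀ x, HasGradientAt h₁ (g₁ x) x)
    (hg₂ : ∀ x, HasGradientAt h₂ (g₂ x) x) (ρ : ℝ) (x : E) :
    maxSubdiff h₁ h₂ ρ x =
      if h₂ x + ρ < h₁ x then {g₁ x}
      else if h₁ x + ρ < h₂ x then {g₂ x}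
      else {g | ∃ α ∈ Icc (0 : ℝ) 1, g = α • g₁ x + (1 - α) • g₂ x} := by
  have hsegment : segment ℝ (g₁ x) (g₂ x) =
      {g | ∃ α ∈ Icc (0 : ℝ) 1, g = α • g₁ x + (1 - α) • g₂ x} := by
    rw [segment_symm, segment_eq_image]
    ext g
    simp only [mem_image, mem_ofPred_eq, add_comm, eq_comm]
  simp only [maxSubdiff, gradient_eq hg₁, gradient_eq hg₂, hsegment]

theorem mem_maxSubdiff_iff {ρ : ℝ} (hρ : 0 ≤ ρ) {x g : E} :
    g ∈ maxSubdiff h₁ h₂ ρ x ↔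
      g ∈ segment ℝ (∇ h₁ x) (∇ h₂ x) ∧
        (h₁ x ≤ h₂ x + ρ ∨ g = ∇ h₁ x) ∧ (h₂ x ≤ h₁ x + ρ ∨ g = ∇ h₂ x) := by
  rw [maxSubdiff]
  split_ifs with h₁_dominates h₂_dominates
  · have hle : h₂ x ≤ h₁ x + ρ := by linarith
    simp only [mem_singleton_iff, h₁_dominates.not_ge, hle, false_or, true_or, and_true]
    exact ⟨fun hg ↦ ⟨hg ▸ left_mem_segment ℝ _ _, hg⟩, And.right⟩
  · simp only [mem_singleton_iff, not_lt.1 h₁_dominates, h₂_dominates.not_ge, false_or, true_or,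
      true_and]
    exact ⟨fun hg ↦ ⟨hg ▸ right_mem_segment ℝ _ _, hg⟩, And.right⟩
  · simp only [not_lt.1 h₁_dominates, not_lt.1 h₂_dominates, true_or, and_true]

theorem isClosed_graph_maxSubdiff (hh₁ : ContDiff ℝ 1 h₁) (hh₂ : ContDiff ℝ 1 h₂) :
    IsClosed {p : ℝ × E × E | 0 ≤ p.1 ∧ p.2.2 ∈ maxSubdiff h₁ h₂ p.1 p.2.1} := by
  have hc₁ := hh₁.continuous
  have hc₂ := hh₂.continuous
  have hg₁ := continuous_gradient_of_contDiff hh₁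
  have hg₂ := continuous_gradient_of_contDiff hh₂
  have hgraph : {p : ℝ × E × E | 0 ≤ p.1 ∧ p.2.2 ∈ maxSubdiff h₁ h₂ p.1 p.2.1} =
      {p | 0 ≤ p.1} ∩ ({p | p.2.2 ∈ segment ℝ (∇ h₁ p.2.1) (∇ h₂ p.2.1)} ∩
        (({p | h₁ p.2.1 ≤ h₂ p.2.1 + p.1} ∪ {p | p.2.2 = ∇ h₁ p.2.1}) ∩
          ({p | h₂ p.2.1 ≤ h₁ p.2.1 + p.1} ∪ {p | p.2.2 = ∇ h₂ p.2.1}))) :=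
    Set.ext fun _ ↦ and_congr_right fun hρ ↦ mem_maxSubdiff_iff hρ
  rw [hgraph]
  exact (isClosed_le (by fun_prop) (by fun_prop)).inter <|
    (isClosed_setOf_mem_segment (by fun_prop) (by fun_prop) (by fun_prop)).inter <|
      ((isClosed_le (by fun_prop) (by fun_prop)).union
        (isClosed_eq (by fun_prop) (by fun_prop))).inter
      ((isClosed_le (by fun_prop) (by fun_prop)).union
        (isClosed_eq (by fun_prop) (by fun_prop)))

theorem accumulation_point_critical_general {ι κ : Type*} {l : Filter ι} {m : Filter κ} [l.NeBot]
    (hh₁ : ContDiff ℝ 1 h₁) (hh₂ : ContDiff ℝ 1 h₂) {ρ δ : ι → ℝ} (hρ : ∀ᶠ t in l, 0 ≤ ρ t)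
    (hρ0 : Tendsto ρ l (𝓝 0)) (hδ0 : Tendsto δ l (𝓝 0)) {x : κ → E}
    (hcrit : ∀ᶠ t in l, ∀ᶠ k in m, IsApproxCritical h₁ h₂ (ρ t) (δ t) (x k))
    {xbar : E} (hxbar : MapClusterPt xbar m x) : 0 ∈ maxSubdiff h₁ h₂ 0 xbar := by
  obtain ⟨U, hUm, hxU⟩ := mapClusterPt_iff_ultrafilter.1 hxbar
  -- How far out `k` must be depends on `t`, so `(t, k)` has to follow the curried filter; along the
  -- product filter criticality need not hold eventually.
  have hfst : Tendsto Prod.fst (l.curry (U : Filter κ)) l := tendsto_fst.mono_left curry_le_prod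
  have hsnd : Tendsto Prod.snd (l.curry (U : Filter κ)) U := tendsto_snd.mono_left curry_le_prod
  have hcritU : ∀ᶠ p in l.curry (U : Filter κ),
      IsApproxCritical h₁ h₂ (ρ p.1) (δ p.1) (x p.2) :=
    eventually_curry_iff.2 (hcrit.mono fun _ ht ↦ ht.filter_mono hUm)
  have := curry_neBot l (U : Filter κ)
  obtain ⟨g, hg⟩ := hcritU.choice
  have hg0 : Tendsto g (l.curry (U : Filter κ)) (𝓝 0) :=
    squeeze_zero_norm' (hg.mono fun _ hp ↦ hp.2.le) (hδ0.comp hfst)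
  exact ((isClosed_graph_maxSubdiff hh₁ hh₂).mem_of_tendsto
    ((hρ0.comp hfst).prodMk_nhds ((hxU.comp hsnd).prodMk_nhds hg0))
    ((hfst.eventually hρ).and hg |>.mono fun _ hp ↦ ⟨hp.1, hp.2.1⟩)).2

end ClosedGraph

section Quadratic

variable {E : Type*} [NormedAddCommGroup E] [InnerProductSpace ℝ E] {T : E →ₗ[ℝ] E}

theorem contDiff_quadratic (hT : Continuous T) (a : E) (r : ℝ) {k : WithTop ℕ∞} :
    ContDiff ℝ k (fun y ↦ (1 / 2) * ⟪y, T y⟫ + ⟪a, y⟫ + r) := by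
  have hTk : ContDiff ℝ k T := ContinuousLinearMap.contDiff (⟨T, hT⟩ : E →L[ℝ] E)
  exact ((contDiff_const.mul (contDiff_id.inner ℝ hTk)).add
    (contDiff_const.inner ℝ contDiff_id)).add contDiff_const

theorem hasGradientAt_quadratic [CompleteSpace E] (hT : T.IsSymmetric) (a : E) (r : ℝ) (x : E) :
    HasGradientAt (fun y ↦ (1 / 2) * ⟪y, T y⟫ + ⟪a, y⟫ + r) (T x + a) x := by
  let L : E →L[ℝ] E := ⟨T, hT.continuous⟩
  have hquad : HasFDerivAt (fun y ↦ ⟪y, T y⟫) _ x := (hasFDerivAt_id x).inner ℝ L.hasFDerivAt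
  have hlin : HasFDerivAt (fun y ↦ ⟪a, y⟫) (innerSL ℝ a) x := (innerSL ℝ a).hasFDerivAt
  rw [hasGradientAt_iff_hasFDerivAt]
  refine (((hquad.const_mul (1 / 2)).add hlin).add_const r).congr_fderiv ?_
  refine ContinuousLinearMap.ext fun v ↦ ?_
  change (1 / 2) * (⟪x, T v⟫ + ⟪v, T x⟫) + ⟪a, v⟫ = ⟪T x + a, v⟫
  rw [← hT x v, real_inner_comm (T x) v, inner_add_left]
  ring

end Quadratic

/-- If `x_k` is eventually a `(ρ^t, δ^t)`-critical point of `H = max{h1, h2}` for each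
`t`, where `(ρ^t, δ^t) → (0, 0)`, then every accumulation point of `{x_k}` is a
critical point of `H`, i.e. `0 ∈ ∂H(x̄)`. -/
theorem accumulation_point_critical
    (n : ℕ) (A1 A2 : Matrix (Fin n) (Fin n) ℝ)
    (hA1s : A1.IsSymm) (hA2s : A2.IsSymm)
    (hA1 : A1.PosSemidef) (hA2 : A2.PosSemidef)
    (a1 a2 : EuclideanSpace ℝ (Fin n)) (r1 r2 : ℝ)
    (h1 h2 H : EuclideanSpace ℝ (Fin n) → ℝ)
    (hh1 : ∀ x, h1 x = (1 / 2) * ⟪x, A1.toEuclideanLin x⟫ + ⟪a1, x⟫ + r1)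
    (hh2 : ∀ x, h2 x = (1 / 2) * ⟪x, A2.toEuclideanLin x⟫ + ⟪a2, x⟫ + r2)
    (hH : ∀ x, H x = max (h1 x) (h2 x))
    (grad1 grad2 : EuclideanSpace ℝ (Fin n) → EuclideanSpace ℝ (Fin n))
    (hgrad1 : ∀ x, grad1 x = A1.toEuclideanLin x + a1)
    (hgrad2 : ∀ x, grad2 x = A2.toEuclideanLin x + a2)
    (subdiffH : EuclideanSpace ℝ (Fin n) → Set (EuclideanSpace ℝ (Fin n)))
    (hsub : ∀ x, subdiffH x =
      if h2 x < h1 x then {grad1 x}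
      else if h1 x < h2 x then {grad2 x}
      else {g | ∃ α ∈ Set.Icc (0 : ℝ) 1, g = α • grad1 x + (1 - α) • grad2 x})
    (subdiffHρ : ℝ → EuclideanSpace ℝ (Fin n) → Set (EuclideanSpace ℝ (Fin n)))
    (hsubρ : ∀ ρ x, subdiffHρ ρ x =
      if h2 x + ρ < h1 x then {grad1 x}
      else if h1 x + ρ < h2 x then {grad2 x}
      else {g | ∃ α ∈ Set.Icc (0 : ℝ) 1, g = α • grad1 x + (1 - α) • grad2 x})
    (ρ δ : ℕ → ℝ) (hρpos : ∀ t, 0 < ρ t) (hδpos : ∀ t, 0 < δ t)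
    (hρ0 : Filter.Tendsto ρ Filter.atTop (nhds 0))
    (hδ0 : Filter.Tendsto δ Filter.atTop (nhds 0))
    (x : ℕ → EuclideanSpace ℝ (Fin n))
    (K : ℕ → ℕ)
    (hcrit : ∀ t : ℕ, 1 ≤ t → ∀ k : ℕ, K t ≤ k →
      ∃ g ∈ subdiffHρ (ρ t) (x k), ‖g‖ < δ t) :
    ∀ xbar : EuclideanSpace ℝ (Fin n),
      (∃ φ : ℕ → ℕ, StrictMono φ ∧
        Filter.Tendsto (x ∘ φ) Filter.atTop (nhds xbar)) →
      0 ∈ subdiffH xbar := by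
  rintro xbar ⟨φ, hφ, hx⟩
  have hT1 := isSymmetric_toEuclideanLin_iff.2 hA1.isHermitian
  have hT2 := isSymmetric_toEuclideanLin_iff.2 hA2.isHermitian
  have hg1 : ∀ y, HasGradientAt h1 (grad1 y) y := fun y ↦ by
    rw [funext hh1, hgrad1]
    exact hasGradientAt_quadratic hT1 a1 r1 y
  have hg2 : ∀ y, HasGradientAt h2 (grad2 y) y := fun y ↦ by
    rw [funext hh2, hgrad2]
    exact hasGradientAt_quadratic hT2 a2 r2 y
  have hsub0 : subdiffH xbar = maxSubdiff h1 h2 0 xbar := by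
    simp only [hsub, maxSubdiff_eq_ite hg1 hg2, add_zero]
  have hsubρ' (s : ℝ) (y) : subdiffHρ s y = maxSubdiff h1 h2 s y := by
    rw [hsubρ, maxSubdiff_eq_ite hg1 hg2]
  simp only [hsubρ'] at hcrit
  rw [hsub0]
  exact accumulation_point_critical_general
    (funext hh1 ▸ contDiff_quadratic hT1.continuous a1 r1)
    (funext hh2 ▸ contDiff_quadratic hT2.continuous a2 r2)
    (.of_forall fun t ↦ (hρpos t).le) hρ0 hδ0
    ((Filter.eventually_ge_atTop 1).mono fun t ht ↦
      (Filter.eventually_ge_atTop (K t)).mono (hcrit t ht))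
    (hx.mapClusterPt.of_comp hφ.tendsto_atTop)
end

section
/- Let A be an n×n symmetric positive definite matrix, B an n×n symmetric matrix, a ∈ ℝⁿ, and c1 ≤ c2 real numbers. Let x0 = A⁻¹a be the unconstrained minimizer of xᵀAx − 2aᵀx. If x0ᵀB x0 < c1, then problem (IP) is equivalent to problem (IP1): inf{xᵀAx − 2aᵀx : c1 ≤ xᵀBx ≤ c2} = inf{xᵀAx − 2aᵀx : c1 ≤ xᵀBx}. -/
open Matrix

/-!
The objective is convex, so its sublevel sets are connected. Write `q x = xᵀBx`. The sublevel set
through a point `x` with `c₁ ≤ q x` also contains the unconstrained minimizer `x₀`, where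
`q x₀ < c₁`; hence the continuous function `q` takes the value `c₁` somewhere on it. Every point
feasible for (IP1) is thus matched or beaten by a point with `q = c₁`, which is feasible for (IP).
-/

section Topological

variable {E α β : Type*} [TopologicalSpace E] [LinearOrder α] [TopologicalSpace α]
  [OrderClosedTopology α] {q : E → α} {c₁ c₂ : α} {x₀ : E}

theorem exists_eq_and_le_of_isPreconnected [Preorder β] {f : E → β} {x : E}
    (hf : IsPreconnected {y | f y ≤ f x}) (hq : Continuous q) (hx₀ : f x₀ ≤ f x)
    (hqx₀ : q x₀ ≤ c₁) (hqx : c₁ ≤ q x) : ∃ y, q y = c₁ ∧ f y ≤ f x := by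
  obtain ⟨y, hyx, hqy⟩ :=
    hf.intermediate_value hx₀ (le_refl (f x)) hq.continuousOn ⟨hqx₀, hqx⟩
  exact ⟨y, hqy, hyx⟩

theorem interval_problem_reduction_general [ConditionallyCompleteLinearOrder β] {f : E → β}
    (hf : ∀ r, IsPreconnected {x | f x ≤ r}) (hq : Continuous q)
    (hmin : IsMinOn f {x | c₁ ≤ q x} x₀) (hqx₀ : q x₀ ≤ c₁) (hc : c₁ ≤ c₂) :
    sInf (f '' {x | c₁ ≤ q x ∧ q x ≤ c₂}) = sInf (f '' {x | c₁ ≤ q x}) := by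
  apply csInf_eq_csInf_of_forall_exists_le
  · rintro _ ⟨x, hx, rfl⟩
    exact ⟨f x, ⟨x, hx.1, rfl⟩, le_rfl⟩
  · rintro _ ⟨x, hx, rfl⟩
    obtain ⟨y, hqy, hyx⟩ := exists_eq_and_le_of_isPreconnected (hf (f x)) hq (hmin hx) hqx₀ hx
    exact ⟨f y, ⟨y, ⟨hqy.ge, hqy.trans_le hc⟩, rfl⟩, hyx⟩

end Topological

section QuadraticObjective

variable {ι R : Type*} [Fintype ι] [CommRing R] {A : Matrix ι ι R} {a x₀ : ι → R}

/-- The objective `xᵀAx - 2aᵀx` shared by (IP) and (IP1); the factor `2` makes `A x = a` its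
stationarity equation for symmetric `A`. -/
def quadraticObjective (A : Matrix ι ι R) (a x : ι → R) : R :=
  x ⬝ᵥ A *ᵥ x - 2 * (a ⬝ᵥ x)

theorem quadraticObjective_smul_add_smul (A : Matrix ι ι R) (a x y : ι → R) {s t : R}
    (hst : s + t = 1) :
    quadraticObjective A a (s • x + t • y) = s * quadraticObjective A a x +
      t * quadraticObjective A a y - s * t * ((x - y) ⬝ᵥ A *ᵥ (x - y)) := by
  obtain rfl : s = 1 - t := eq_sub_of_add_eq hst
  simp only [quadraticObjective, mulVec_add, mulVec_sub, mulVec_smul, dotProduct_add,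
    dotProduct_sub, dotProduct_smul, add_dotProduct, sub_dotProduct, smul_dotProduct, smul_eq_mul]
  ring

theorem quadraticObjective_eq_add_of_mulVec_eq (hA : A.IsSymm) (hx₀ : A *ᵥ x₀ = a) (x : ι → R) :
    quadraticObjective A a x =
      quadraticObjective A a x₀ + (x - x₀) ⬝ᵥ A *ᵥ (x - x₀) := by
  have hcross : x₀ ⬝ᵥ A *ᵥ x = a ⬝ᵥ x := by
    rw [dotProduct_mulVec, ← mulVec_transpose, hA.eq, hx₀]
  simp only [quadraticObjective, mulVec_sub, dotProduct_sub, sub_dotProduct, hx₀, hcross,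
    dotProduct_comm _ a]
  ring

variable [PartialOrder R] [StarRing R] [TrivialStar R]

theorem convexOn_quadraticObjective [IsOrderedRing R] (hA : A.PosSemidef) (a : ι → R) :
    ConvexOn R Set.univ (quadraticObjective A a) := by
  refine ⟨convex_univ, fun x _ y _ s t hs ht hst ↦ ?_⟩
  have hxy : 0 ≤ (x - y) ⬝ᵥ A *ᵥ (x - y) := by
    simpa only [star_trivial] using hA.dotProduct_mulVec_nonneg (x - y)
  rw [quadraticObjective_smul_add_smul A a x y hst]
  exact sub_le_self _ (mul_nonneg (mul_nonneg hs ht) hxy)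

theorem isMinOn_quadraticObjective [IsOrderedAddMonoid R] (hA : A.PosSemidef)
    (hx₀ : A *ᵥ x₀ = a) (S : Set (ι → R)) : IsMinOn (quadraticObjective A a) S x₀ := by
  intro x _
  have hx : 0 ≤ (x - x₀) ⬝ᵥ A *ᵥ (x - x₀) := by
    simpa only [star_trivial] using hA.dotProduct_mulVec_nonneg (x - x₀)
  have hsymm : A.IsSymm := isHermitian_iff_isSymm.mp hA.isHermitian
  exact (le_add_of_nonneg_right hx).trans_eq
    (quadraticObjective_eq_add_of_mulVec_eq hsymm hx₀ x).symm

end QuadraticObjective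

theorem isPreconnected_quadraticObjective_le {ι : Type*} [Fintype ι] {A : Matrix ι ι ℝ}
    (hA : A.PosSemidef) (a : ι → ℝ) (r : ℝ) :
    IsPreconnected {x | quadraticObjective A a x ≤ r} := by
  simpa using ((convexOn_quadraticObjective hA a).convex_le r).isPreconnected

theorem mulVec_inv_mulVec_of_isUnit {ι R : Type*} [Fintype ι] [DecidableEq ι] [CommRing R]
    {A : Matrix ι ι R} (hA : IsUnit A) (v : ι → R) : A *ᵥ A⁻¹ *ᵥ v = v := by
  rw [mulVec_mulVec, mul_nonsing_inv A ((isUnit_iff_isUnit_det A).mp hA), one_mulVec]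

/-- If the unconstrained minimizer `x0 = A⁻¹ a` of `xᵀAx - 2aᵀx` satisfies
`x0ᵀ B x0 < c1`, then the interval-constrained problem (IP) is equivalent to the
one-sided problem (IP1). -/
theorem interval_problem_reduction
    (n : ℕ) (A B : Matrix (Fin n) (Fin n) ℝ)
    (hAs : A.IsSymm) (hA : A.PosDef) (hBs : B.IsSymm)
    (a : Fin n → ℝ) (c1 c2 : ℝ) (hc : c1 ≤ c2)
    (f : (Fin n → ℝ) → ℝ)
    (hf : ∀ x, f x = x ⬝ᵥ A.mulVec x - 2 * (a ⬝ᵥ x))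
    (x0 : Fin n → ℝ) (hx0 : x0 = A⁻¹.mulVec a)
    (hlt : x0 ⬝ᵥ B.mulVec x0 < c1) :
    sInf (f '' {x | c1 ≤ x ⬝ᵥ B.mulVec x ∧ x ⬝ᵥ B.mulVec x ≤ c2}) =
    sInf (f '' {x | c1 ≤ x ⬝ᵥ B.mulVec x}) := by
  obtain rfl : f = quadraticObjective A a := funext hf
  have hstat : A *ᵥ x0 = a := hx0 ▸ mulVec_inv_mulVec_of_isUnit hA.isUnit a
  exact interval_problem_reduction_general (isPreconnected_quadraticObjective_le hA.posSemidef a)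
    (by fun_prop) (isMinOn_quadraticObjective hA.posSemidef hstat _) hlt.le hc
end
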